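/- For every k ∈ ℕ and ε > 0 there exists δ₀ = δ₀(ε,k) ∈ ℕ such that the following holds for all δ ≥ δ₀: let G = (V,E) be a finite k-uniform linear hypergraph with an edge correspondence σ and weighted lists of colours (L,μ). If for every edge e ∈ E we have (a) μ(e,c) ∈ [exp(−δ^{1/25}), δ^{−1}] for every c ∈ L(e), (b) |L(e)|_μ ≥ 1+ε, and (c) |N_{G,L,σ}(e,v,c)|_μ ≤ 1 for every vertex v ∈ e and colour c ∈ L(e), then there is an (L,σ)-colouring of G. -/

import Mathlib

/-- Two hyperedges are incident if they are distinct and intersect. -/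
def HIncident {V : Type} [DecidableEq V] (e f : Finset V) : Prop :=
  e ≠ f ∧ (e ∩ f).Nonempty

instance {V : Type} [DecidableEq V] (e f : Finset V) : Decidable (HIncident e f) :=
  inferInstanceAs (Decidable (e ≠ f ∧ (e ∩ f).Nonempty))

/-- `σ` is an edge correspondence on the edge set `E`: for incident edges,
`σ_{f,e}` is the inverse of `σ_{e,f}`. -/
def IsEdgeCorrespondence {V : Type} [DecidableEq V] (E : Finset (Finset V))
    (σ : Finset V → Finset V → ℕ ≃ ℕ) : Prop :=
  ∀ e ∈ E, ∀ f ∈ E, HIncident e f → σ f e = (σ e f).symm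

/-- The weighted size `|N_{G,L,σ}(e,v,c)|_μ` of the colour neighbourhood of `(e,v,c)`:
the `μ`-weight of all pairs `(f, c')` with `v ∈ f`, `f ≠ e`, `c' ∈ L f` and
`(f, c')` blocking `(e, c)`, i.e. `σ f e c' = c`. -/
def NWeight {V : Type} [DecidableEq V] (E : Finset (Finset V))
    (L : Finset V → Finset ℕ) (μ : Finset V → ℕ → ℝ)
    (σ : Finset V → Finset V → ℕ ≃ ℕ) (e : Finset V) (v : V) (c : ℕ) : ℝ :=
  ∑ f ∈ E.filter (fun f => v ∈ f ∧ f ≠ e),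
    ∑ c' ∈ (L f).filter (fun c' => σ f e c' = c), μ f c'

/-- An `(L,σ)`-colouring of the hypergraph with edge set `E`. -/
def IsLσColouring {V : Type} [DecidableEq V] (E : Finset (Finset V))
    (L : Finset V → Finset ℕ) (σ : Finset V → Finset V → ℕ ≃ ℕ)
    (γ : Finset V → ℕ) : Prop :=
  (∀ e ∈ E, γ e ∈ L e) ∧
  ∀ e ∈ E, ∀ f ∈ E, HIncident e f → σ e f (γ e) ≠ γ f


open Classical in
/-- Expectation over a random subset `A` of `S`, each `i` present independently w.p. `p i`. -/
noncomputable def Ex {ι : Type} (p : ι → ℝ) (S : Finset ι) (F : Finset ι → ℝ) : ℝ :=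
  ∑ A ∈ S.powerset, (∏ i ∈ A, p i) * (∏ i ∈ S \ A, (1 - p i)) * F A

open Classical in
/-- Probability of an event. -/
noncomputable def Pr {ι : Type} (p : ι → ℝ) (S : Finset ι) (P : Finset ι → Prop) : ℝ :=
  Ex p S (fun A => if P A then 1 else 0)

section prob
open Classical
variable {ι : Type}

lemma Ex_empty (p : ι → ℝ) (F : Finset ι → ℝ) : Ex p ∅ F = F ∅ := by
  simp [Ex]

lemma Ex_insert (p : ι → ℝ) {S : Finset ι} {i : ι} (hi : i ∉ S) (F : Finset ι → ℝ) :
    Ex p (insert i S) F = Ex p S (fun A => (1 - p i) * F A + p i * F (insert i A)) := by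
  unfold Ex
  rw [Finset.sum_powerset_insert hi, ← Finset.sum_add_distrib]
  apply Finset.sum_congr rfl
  intro A hA
  have hA' : A ⊆ S := Finset.mem_powerset.1 hA
  have hiA : i ∉ A := fun h => hi (hA' h)
  have h1 : insert i S \ A = insert i (S \ A) := by
    rw [Finset.insert_sdiff_of_notMem _ hiA]
  have h2 : insert i S \ insert i A = S \ A := by
    ext j; simp only [Finset.mem_sdiff, Finset.mem_insert]
    constructor
    · rintro ⟨h | h, h'⟩
      · exact absurd (Or.inl h) h'
      · exact ⟨h, fun h'' => h' (Or.inr h'')⟩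
    · rintro ⟨h, h'⟩
      refine ⟨Or.inr h, ?_⟩
      rintro (rfl | h'')
      · exact hi h
      · exact h' h''
  rw [h1, h2, Finset.prod_insert hiA, Finset.prod_insert (by simp [hi])]
  ring

lemma Ex_add (p : ι → ℝ) (S : Finset ι) (F G : Finset ι → ℝ) :
    Ex p S (fun A => F A + G A) = Ex p S F + Ex p S G := by
  unfold Ex; rw [← Finset.sum_add_distrib]; apply Finset.sum_congr rfl; intros; ring

lemma Ex_mul_left (p : ι → ℝ) (S : Finset ι) (c : ℝ) (F : Finset ι → ℝ) :
    Ex p S (fun A => c * F A) = c * Ex p S F := by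
  unfold Ex; rw [Finset.mul_sum]; apply Finset.sum_congr rfl; intros; ring

lemma Ex_sum {α : Type} (p : ι → ℝ) (S : Finset ι) (T : Finset α) (F : α → Finset ι → ℝ) :
    Ex p S (fun A => ∑ a ∈ T, F a A) = ∑ a ∈ T, Ex p S (F a) := by
  unfold Ex; rw [Finset.sum_comm]; apply Finset.sum_congr rfl; intros; rw [Finset.mul_sum]

lemma Ex_congr (p : ι → ℝ) (S : Finset ι) {F G : Finset ι → ℝ} (h : ∀ A, A ⊆ S → F A = G A) :
    Ex p S F = Ex p S G := by
  unfold Ex; apply Finset.sum_congr rfl; intro A hA; rw [h A (Finset.mem_powerset.1 hA)]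

lemma Ex_mono {p : ι → ℝ} (hp : ∀ i, 0 ≤ p i ∧ p i ≤ 1) (S : Finset ι) {F G : Finset ι → ℝ}
    (h : ∀ A, A ⊆ S → F A ≤ G A) : Ex p S F ≤ Ex p S G := by
  unfold Ex; apply Finset.sum_le_sum; intro A hA
  apply mul_le_mul_of_nonneg_left (h A (Finset.mem_powerset.1 hA))
  apply mul_nonneg
  · exact Finset.prod_nonneg fun i _ => (hp i).1
  · exact Finset.prod_nonneg fun i _ => by linarith [(hp i).2]

/-- product formula -/
lemma Ex_prod (p : ι → ℝ) (S : Finset ι) (g : ι → ℝ) :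
    Ex p S (fun A => ∏ i ∈ A, g i) = ∏ i ∈ S, (1 - p i + p i * g i) := by
  induction S using Finset.induction_on with
  | empty => simp [Ex_empty]
  | insert i S hi ih =>
    rw [Ex_insert p hi, Finset.prod_insert hi, ← ih, ← Ex_mul_left]
    apply Ex_congr
    intro A hA
    rw [Finset.prod_insert (fun h => hi (hA h))]
    ring

lemma Ex_const (p : ι → ℝ) (S : Finset ι) (c : ℝ) : Ex p S (fun _ => c) = c := by
  induction S using Finset.induction_on with
  | empty => simp [Ex_empty]
  | insert i S hi ih =>
    rw [Ex_insert p hi, ← ih]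
    apply Ex_congr; intros; rw [ih]; ring

lemma Ex_nonneg {p : ι → ℝ} (hp : ∀ i, 0 ≤ p i ∧ p i ≤ 1) (S : Finset ι) {F : Finset ι → ℝ}
    (h : ∀ A, A ⊆ S → 0 ≤ F A) : 0 ≤ Ex p S F := by
  have := Ex_mono hp S (F := fun _ => 0) (G := F) h
  rwa [Ex_const] at this

/-- independence -/
lemma Ex_indep (p : ι → ℝ) (S D : Finset ι) : ∀ (F G : Finset ι → ℝ)
    (_ : ∀ A, F A = F (A ∩ D)) (_ : ∀ A, G A = G (A \ D)),
    Ex p S (fun A => F A * G A) = Ex p S F * Ex p S G := by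
  induction S using Finset.induction_on with
  | empty => intros; simp [Ex_empty]
  | insert i S hi ih =>
    intro F G hF hG
    rw [Ex_insert p hi, Ex_insert p hi, Ex_insert p hi]
    by_cases hD : i ∈ D
    · have hG' : ∀ A, G (insert i A) = G A := by
        intro A; rw [hG (insert i A), hG A, Finset.insert_sdiff_of_mem _ hD]
      have hF' : ∀ A, F (insert i A) = F (insert i (A ∩ D)) := by
        intro A
        rw [hF (insert i A), hF (insert i (A ∩ D))]
        congr 1
        ext j; simp only [Finset.mem_inter, Finset.mem_insert]; tauto
      have := ih (fun A => (1 - p i) * F A + p i * F (insert i A)) G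
        (fun A => by
          show (1 - p i) * F A + p i * F (insert i A)
            = (1 - p i) * F (A ∩ D) + p i * F (insert i (A ∩ D))
          rw [hF A, hF' A]) hG
      rw [Ex_congr p S (G := fun A => ((1 - p i) * F A + p i * F (insert i A)) * G A)
        (fun A _ => by rw [hG']; ring), this]
      congr 1
      apply Ex_congr; intro A _; rw [hG']; ring
    · have hF' : ∀ A, F (insert i A) = F A := by
        intro A; rw [hF (insert i A), hF A, Finset.insert_inter_of_notMem hD]
      have hG' : ∀ A, G (insert i A) = G (insert i (A \ D)) := by
        intro A
        rw [hG (insert i A), hG (insert i (A \ D))]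
        congr 1
        ext j; simp only [Finset.mem_sdiff, Finset.mem_insert]; tauto
      have := ih F (fun A => (1 - p i) * G A + p i * G (insert i A)) hF
        (fun A => by
          show (1 - p i) * G A + p i * G (insert i A)
            = (1 - p i) * G (A \ D) + p i * G (insert i (A \ D))
          rw [hG A, hG' A])
      rw [Ex_congr p S (G := fun A => F A * ((1 - p i) * G A + p i * G (insert i A)))
        (fun A _ => by rw [hF']; ring), this]
      congr 1
      apply Ex_congr; intro A _; rw [hF']; ring

lemma Pr_nonneg {p : ι → ℝ} (hp : ∀ i, 0 ≤ p i ∧ p i ≤ 1) (S : Finset ι) (P : Finset ι → Prop) :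
    0 ≤ Pr p S P :=
  Ex_nonneg hp S fun A _ => by split_ifs <;> norm_num

lemma Pr_mono {p : ι → ℝ} (hp : ∀ i, 0 ≤ p i ∧ p i ≤ 1) (S : Finset ι) {P Q : Finset ι → Prop}
    (h : ∀ A, A ⊆ S → P A → Q A) : Pr p S P ≤ Pr p S Q := by
  apply Ex_mono hp
  intro A hA
  by_cases h1 : P A
  · simp [h1, h A hA h1]
  · simp only [h1, if_false]; split_ifs <;> norm_num

lemma Pr_or {p : ι → ℝ} (hp : ∀ i, 0 ≤ p i ∧ p i ≤ 1) (S : Finset ι) (P Q : Finset ι → Prop) :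
    Pr p S (fun A => P A ∨ Q A) ≤ Pr p S P + Pr p S Q := by
  unfold Pr
  rw [← Ex_add]
  apply Ex_mono hp
  intro A _
  by_cases h1 : P A <;> by_cases h2 : Q A <;> simp [h1, h2]

lemma Pr_exists {p : ι → ℝ} (hp : ∀ i, 0 ≤ p i ∧ p i ≤ 1) (S : Finset ι) {α : Type} (T : Finset α)
    (P : α → Finset ι → Prop) :
    Pr p S (fun A => ∃ a ∈ T, P a A) ≤ ∑ a ∈ T, Pr p S (P a) := by
  unfold Pr
  rw [← Ex_sum]
  apply Ex_mono hp
  intro A _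
  by_cases h : ∃ a ∈ T, P a A
  · obtain ⟨a, ha, h'⟩ := h
    have : (∃ a ∈ T, P a A) := ⟨a, ha, h'⟩
    rw [if_pos this]
    calc (1 : ℝ) = if P a A then 1 else 0 := by simp [h']
      _ ≤ _ := Finset.single_le_sum (f := fun a => if P a A then (1 : ℝ) else 0)
        (fun b _ => by split_ifs <;> norm_num) ha
  · rw [if_neg h]
    exact Finset.sum_nonneg fun b _ => by split_ifs <;> norm_num

/-- Markov for exponential moments -/
lemma Pr_markov {p : ι → ℝ} (hp : ∀ i, 0 ≤ p i ∧ p i ≤ 1) (S : Finset ι) (P : Finset ι → Prop)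
    (F : Finset ι → ℝ) (t : ℝ) (hF : ∀ A, A ⊆ S → 0 ≤ F A)
    (h : ∀ A, A ⊆ S → P A → Real.exp t ≤ F A) :
    Pr p S P ≤ Real.exp (-t) * Ex p S F := by
  unfold Pr
  rw [← Ex_mul_left]
  apply Ex_mono hp
  intro A hA
  split_ifs with h1
  · calc (1 : ℝ) = Real.exp (-t) * Real.exp t := by rw [← Real.exp_add]; simp
      _ ≤ _ := mul_le_mul_of_nonneg_left (h A hA h1) (Real.exp_pos _).le
  · exact mul_nonneg (Real.exp_pos _).le (hF A hA)

lemma exp_le_quad {u : ℝ} (h : |u| ≤ 1) : Real.exp u ≤ 1 + u + u ^ 2 := by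
  have := Real.abs_exp_sub_one_sub_id_le h
  have := (abs_le.1 this).2
  linarith

/-- bounded differences with Bernoulli variables -/
lemma Ex_mgf {p : ι → ℝ} (hp : ∀ i, 0 ≤ p i ∧ p i ≤ 1) (c : ι → ℝ) (l : ℝ) (S : Finset ι) :
    ∀ (F : Finset ι → ℝ) (_ : ∀ A, ∀ i ∈ S, |F (insert i A) - F A| ≤ c i)
    (_ : ∀ i ∈ S, |l| * c i ≤ 1),
    Ex p S (fun A => Real.exp (l * F A)) ≤
      Real.exp (l * Ex p S F + l ^ 2 * ∑ i ∈ S, p i * c i ^ 2) := by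
  induction S using Finset.induction_on with
  | empty => intros; simp [Ex_empty]
  | insert i S hi ih =>
    intro F hF hc
    set G : Finset ι → ℝ := fun A => (1 - p i) * F A + p i * F (insert i A) with hG
    have hp0 := (hp i).1
    have hp1 := (hp i).2
    have key : ∀ A, (1 - p i) * Real.exp (l * F A) + p i * Real.exp (l * F (insert i A)) ≤
        Real.exp (l ^ 2 * (p i * c i ^ 2)) * Real.exp (l * G A) := by
      intro A
      set d := F (insert i A) - F A with hd
      have hdc : |d| ≤ c i := hF A i (Finset.mem_insert_self _ _)
      have hc0 : 0 ≤ c i := le_trans (abs_nonneg _) hdc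
      have hld : |l * d| ≤ 1 := by
        rw [abs_mul]
        exact le_trans (mul_le_mul_of_nonneg_left hdc (abs_nonneg _))
          (hc i (Finset.mem_insert_self _ _))
      have e1 : l * F A = l * G A + (- p i) * (l * d) := by simp only [hG, hd]; ring
      have e2 : l * F (insert i A) = l * G A + (1 - p i) * (l * d) := by simp only [hG, hd]; ring
      rw [e1, e2, Real.exp_add, Real.exp_add]
      have b1 : |(-p i) * (l * d)| ≤ 1 := by
        rw [abs_mul, abs_neg, abs_of_nonneg hp0]
        exact mul_le_one₀ hp1 (abs_nonneg _) hld
      have b2 : |(1 - p i) * (l * d)| ≤ 1 := by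
        rw [abs_mul, abs_of_nonneg (by linarith : 0 ≤ 1 - p i)]
        exact mul_le_one₀ (by linarith) (abs_nonneg _) hld
      have q1 := exp_le_quad b1
      have q2 := exp_le_quad b2
      have hdd : d ^ 2 ≤ c i ^ 2 := by
        rw [← sq_abs d]; exact pow_le_pow_left₀ (abs_nonneg _) hdc 2
      have q3 : 1 + l ^ 2 * (p i * c i ^ 2) ≤ Real.exp (l ^ 2 * (p i * c i ^ 2)) := by
        rw [add_comm]; exact Real.add_one_le_exp _
      have main : (1 - p i) * Real.exp (-p i * (l * d)) + p i * Real.exp ((1 - p i) * (l * d)) ≤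
          Real.exp (l ^ 2 * (p i * c i ^ 2)) := by
        refine le_trans ?_ q3
        have s1 := mul_le_mul_of_nonneg_left q1 (by linarith : 0 ≤ 1 - p i)
        have s2 := mul_le_mul_of_nonneg_left q2 hp0
        have s3 : l ^ 2 * (p i * d ^ 2) ≤ l ^ 2 * (p i * c i ^ 2) := by gcongr
        have s4 : 0 ≤ l ^ 2 * d ^ 2 * p i ^ 2 := by positivity
        nlinarith
      calc _ = Real.exp (l * G A) * ((1 - p i) * Real.exp (-p i * (l * d)) +
            p i * Real.exp ((1 - p i) * (l * d))) := by ring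
        _ ≤ Real.exp (l * G A) * Real.exp (l ^ 2 * (p i * c i ^ 2)) :=
            mul_le_mul_of_nonneg_left main (Real.exp_pos _).le
        _ = _ := by ring
    rw [Ex_insert p hi, Ex_insert p hi, Finset.sum_insert hi]
    refine le_trans (Ex_mono hp S fun A _ => key A) ?_
    rw [Ex_mul_left]
    have := ih G (by
      intro A j hj
      have h1 := hF A j (Finset.mem_insert_of_mem hj)
      have h2 := hF (insert i A) j (Finset.mem_insert_of_mem hj)
      have e : G (insert j A) - G A = (1 - p i) * (F (insert j A) - F A) +
        p i * (F (insert j (insert i A)) - F (insert i A)) := by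
        simp only [hG]; rw [Finset.insert_comm i j]; ring
      rw [e]
      refine le_trans (abs_add_le _ _) ?_
      rw [abs_mul, abs_mul, abs_of_nonneg hp0, abs_of_nonneg (by linarith : 0 ≤ 1 - p i)]
      nlinarith) (fun j hj => hc j (Finset.mem_insert_of_mem hj))
    refine le_trans (mul_le_mul_of_nonneg_left this (Real.exp_pos _).le) ?_
    rw [← Real.exp_add]
    apply le_of_eq; congr 1; ring

/-- supermartingale bound for quadratic forms -/
lemma Ex_quad {p : ι → ℝ} (hp : ∀ i, 0 ≤ p i ∧ p i ≤ 1) (a : ι → ι → ℝ)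
    (ha0 : ∀ i j, 0 ≤ a i j) (q : Finset ι → ℝ) (hq0 : q ∅ = 0)
    (Good : Finset ι → Prop) (hGood : ∀ A i, Good (insert i A) → Good A)
    (l : ℝ) (hl : 0 ≤ l) (S : Finset ι) :
    ∀ (_ : ∀ i ∈ S, ∀ A, A ⊆ S → i ∉ A → q (insert i A) ≤ q A + ∑ j ∈ A, a i j)
    (_ : ∀ A, A ⊆ S → Good A → ∀ i ∈ S, l * ∑ j ∈ A, a i j ≤ 1),
    Ex p S (fun A => if Good A then Real.exp (l * q A - 2 * l * ∑ j ∈ A, ∑ i ∈ S, p i * a i j)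
      else 0) ≤ 1 := by
  induction S using Finset.induction_on with
  | empty => intros; simp only [Ex_empty]; split_ifs <;> simp [hq0]
  | insert i S hi ih =>
    intro hq hb
    rw [Ex_insert p hi]
    refine le_trans (Ex_mono hp S ?_) (ih
      (fun j hj A hA => hq j (Finset.mem_insert_of_mem hj) A (hA.trans (Finset.subset_insert _ _)))
      (fun A hA hg j hj => hb A (hA.trans (Finset.subset_insert _ _)) hg j
        (Finset.mem_insert_of_mem hj)))
    intro A hA
    have hiA : i ∉ A := fun h => hi (hA h)
    have hA' : A ⊆ insert i S := hA.trans (Finset.subset_insert _ _)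
    by_cases hg : Good A
    swap
    · have hg' : ¬ Good (insert i A) := fun h => hg (hGood A i h)
      simp [hg, hg']
    have hp0 := (hp i).1
    have hp1 := (hp i).2
    set b := ∑ j ∈ A, a i j with hbdef
    have hb0 : 0 ≤ b := Finset.sum_nonneg fun j _ => ha0 i j
    have hlb : l * b ≤ 1 := hb A hA' hg i (Finset.mem_insert_self _ _)
    set lin := ∑ j ∈ A, ∑ i ∈ S, p i * a i j with hlin
    have e1 : ∑ j ∈ A, ∑ i' ∈ insert i S, p i' * a i' j = lin + p i * b := by
      rw [hlin, hbdef, Finset.mul_sum, ← Finset.sum_add_distrib]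
      apply Finset.sum_congr rfl
      intro j _
      rw [Finset.sum_insert hi]; ring
    have e2 : lin + p i * b ≤ ∑ j ∈ insert i A, ∑ i' ∈ insert i S, p i' * a i' j := by
      rw [Finset.sum_insert hiA, e1]
      have : 0 ≤ ∑ i' ∈ insert i S, p i' * a i' i :=
        Finset.sum_nonneg fun j _ => mul_nonneg (hp j).1 (ha0 j i)
      linarith
    have e3 := hq i (Finset.mem_insert_self _ _) A hA' hiA
    simp only [hg, if_true]
    rw [e1]
    have t2 : (if Good (insert i A) then Real.exp (l * q (insert i A) -
        2 * l * ∑ j ∈ insert i A, ∑ i' ∈ insert i S, p i' * a i' j) else 0) ≤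
        Real.exp (l * q A - 2 * l * lin) * Real.exp (l * b - 2 * (p i * (l * b))) := by
      split_ifs
      · rw [← Real.exp_add]
        apply Real.exp_le_exp.2
        have f1 := mul_le_mul_of_nonneg_left e3 hl
        have f2 := mul_le_mul_of_nonneg_left e2 hl
        nlinarith
      · positivity
    have t1 : Real.exp (l * q A - 2 * l * (lin + p i * b)) =
        Real.exp (l * q A - 2 * l * lin) * Real.exp (- 2 * (p i * (l * b))) := by
      rw [← Real.exp_add]; congr 1; ring
    rw [t1]
    have hlb0 : 0 ≤ l * b := mul_nonneg hl hb0
    have main : (1 - p i) * Real.exp (- 2 * (p i * (l * b))) +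
        p i * Real.exp (l * b - 2 * (p i * (l * b))) ≤ 1 := by
      have : Real.exp (l * b - 2 * (p i * (l * b))) =
        Real.exp (- 2 * (p i * (l * b))) * Real.exp (l * b) := by
        rw [← Real.exp_add]; congr 1; ring
      rw [this]
      have q1 : Real.exp (l * b) ≤ 1 + 2 * (l * b) := by
        have := exp_le_quad (u := l * b) (by rw [abs_of_nonneg hlb0]; exact hlb)
        nlinarith
      have q2 : (1 - p i) + p i * Real.exp (l * b) ≤ Real.exp (2 * (p i * (l * b))) := by
        have := Real.add_one_le_exp (2 * (p i * (l * b)))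
        nlinarith
      have q3 : Real.exp (- 2 * (p i * (l * b))) * Real.exp (2 * (p i * (l * b))) = 1 := by
        rw [← Real.exp_add]; simp
      have := mul_le_mul_of_nonneg_left q2 (Real.exp_pos (- 2 * (p i * (l * b)))).le
      nlinarith
    have := mul_le_mul_of_nonneg_left main (Real.exp_pos (l * q A - 2 * l * lin)).le
    have := mul_le_mul_of_nonneg_left t2 hp0
    nlinarith

/-- upper tail of linear forms -/
lemma Ex_lin {p : ι → ℝ} (hp : ∀ i, 0 ≤ p i ∧ p i ≤ 1) (u : ι → ℝ) (S : Finset ι) (l : ℝ)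
    (hu : ∀ i ∈ S, 0 ≤ l * u i ∧ l * u i ≤ 1) :
    Ex p S (fun A => Real.exp (l * ∑ i ∈ A, u i)) ≤ Real.exp (2 * l * ∑ i ∈ S, p i * u i) := by
  have : ∀ A, A ⊆ S → Real.exp (l * ∑ i ∈ A, u i) = ∏ i ∈ A, Real.exp (l * u i) := by
    intro A _; rw [Finset.mul_sum, Real.exp_sum]
  rw [Ex_congr p S this, Ex_prod, Finset.mul_sum, Real.exp_sum]
  apply Finset.prod_le_prod
  · intro i _
    have := (hp i).1
    have := (hp i).2
    have := (Real.exp_pos (l * u i)).le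
    have := mul_nonneg (hp i).1 this
    linarith
  · intro i hi
    obtain ⟨h0, h1⟩ := hu i hi
    have q1 : Real.exp (l * u i) ≤ 1 + 2 * (l * u i) := by
      have := exp_le_quad (u := l * u i) (by rw [abs_of_nonneg h0]; exact h1)
      nlinarith
    have := Real.add_one_le_exp (2 * l * (p i * u i))
    have := mul_le_mul_of_nonneg_left q1 (hp i).1
    nlinarith

lemma Pr_empty (p : ι → ℝ) (S T : Finset ι) (hT : T ⊆ S) :
    Pr p S (fun A => ∀ j ∈ A, j ∉ T) = ∏ i ∈ T, (1 - p i) := by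
  unfold Pr
  refine (Ex_congr p S (G := fun A => ∏ i ∈ A, (if i ∈ T then 0 else 1)) ?_).trans ?_
  · intro A _
    by_cases h : ∀ j ∈ A, j ∉ T
    · rw [if_pos h]
      symm; apply Finset.prod_eq_one; intro i hi; simp [h i hi]
    · rw [if_neg h]
      push Not at h
      obtain ⟨j, hj, hjT⟩ := h
      symm; apply Finset.prod_eq_zero hj; simp [hjT]
  rw [Ex_prod, ← Finset.prod_subset hT]
  · apply Finset.prod_congr rfl; intro i hi; simp [hi]
  · intro i _ hi; simp [hi]

/-- symmetric Lovász local lemma -/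
lemma LLL {p : ι → ℝ} (hp : ∀ i, 0 ≤ p i ∧ p i ≤ 1) (S : Finset ι) {τ : Type} (T : Finset τ)
    (B : τ → Finset ι → Prop) (D : τ → Finset ι)
    (dep : ∀ t ∈ T, ∀ A, B t A ↔ B t (A ∩ D t)) (q d : ℝ)
    (hq : ∀ t ∈ T, Pr p S (B t) ≤ q) (hq0 : 0 ≤ q) (hq1 : q ≤ 1 / 4)
    (hd : ∀ t ∈ T, ((T.filter fun s => ¬ Disjoint (D t) (D s)).card : ℝ) ≤ d)
    (hqd : 4 * q * d ≤ 1) : ∃ A, A ⊆ S ∧ ∀ t ∈ T, ¬ B t A := by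
  set h : Finset τ → Finset ι → ℝ := fun U A => if ∀ s ∈ U, ¬ B s A then 1 else 0 with hh
  set f : τ → Finset ι → ℝ := fun t A => if B t A then 1 else 0 with hf
  have h0 : ∀ U A, 0 ≤ h U A := by intro U A; simp only [hh]; split_ifs <;> norm_num
  have f0 : ∀ t A, 0 ≤ f t A := by intro U A; simp only [hf]; split_ifs <;> norm_num
  have claim : ∀ n : ℕ, ∀ U : Finset τ, U.card = n → U ⊆ T → ∀ t ∈ T,
      Ex p S (fun A => f t A * h U A) ≤ 2 * q * Ex p S (h U) := by
    intro n
    induction n using Nat.strong_induction_on with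
    | _ n IH =>
    intro U hUn hUT t ht
    set U1 := U.filter fun s => ¬ Disjoint (D t) (D s) with hU1
    set U2 := U.filter fun s => Disjoint (D t) (D s) with hU2
    have hU2U : U2 ⊆ U := Finset.filter_subset _ _
    have e1 : Ex p S (fun A => f t A * h U A) ≤ q * Ex p S (h U2) := by
      have a1 : Ex p S (fun A => f t A * h U A) ≤ Ex p S (fun A => f t A * h U2 A) := by
        apply Ex_mono hp
        intro A _
        apply mul_le_mul_of_nonneg_left _ (f0 t A)
        simp only [hh]
        by_cases hc : ∀ s ∈ U, ¬ B s A
        · have : ∀ s ∈ U2, ¬ B s A := fun s hs => hc s (hU2U hs)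
          rw [if_pos hc, if_pos this]
        · rw [if_neg hc]; split_ifs <;> norm_num
      have a2 : Ex p S (fun A => f t A * h U2 A) = Ex p S (f t) * Ex p S (h U2) := by
        apply Ex_indep p S (D t)
        · intro A; simp only [hf]; rw [dep t ht A]
        · intro A
          simp only [hh]
          have : (∀ s ∈ U2, ¬ B s A) ↔ (∀ s ∈ U2, ¬ B s (A \ D t)) := by
            apply forall₂_congr
            intro s hs
            rw [dep s (hUT (hU2U hs)) A, dep s (hUT (hU2U hs)) (A \ D t)]
            have hdis : Disjoint (D t) (D s) := (Finset.mem_filter.1 hs).2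
            have : A ∩ D s = (A \ D t) ∩ D s := by
              ext j; simp only [Finset.mem_inter, Finset.mem_sdiff]
              constructor
              · rintro ⟨ha, hs⟩
                exact ⟨⟨ha, fun hj => Finset.disjoint_left.1 hdis hj hs⟩, hs⟩
              · rintro ⟨⟨ha, _⟩, hs⟩; exact ⟨ha, hs⟩
            rw [this]
          simp only [this]
      rw [a2] at a1
      exact a1.trans (mul_le_mul_of_nonneg_right (hq t ht) (Ex_nonneg hp S fun A _ => h0 U2 A))
    have e2 : Ex p S (h U2) ≤ 2 * Ex p S (h U) := by
      by_cases hne : U1 = ∅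
      · have : U2 = U := by
          rw [hU2]; apply Finset.filter_true_of_mem
          intro s hs; by_contra hc
          have : s ∈ U1 := Finset.mem_filter.2 ⟨hs, hc⟩
          rw [hne] at this; simp at this
        rw [this]
        have := Ex_nonneg hp S (F := h U) fun A _ => h0 U A
        linarith
      · obtain ⟨s0, hs0⟩ := Finset.nonempty_iff_ne_empty.2 hne
        have hlt : U2.card < n := by
          rw [← hUn]; apply Finset.card_lt_card
          refine ⟨hU2U, fun hsub => ?_⟩
          have := hsub (Finset.mem_filter.1 hs0).1
          exact (Finset.mem_filter.1 hs0).2 (Finset.mem_filter.1 this).2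
        have a1 : Ex p S (h U2) ≤ Ex p S (h U) + ∑ s ∈ U1, Ex p S (fun A => f s A * h U2 A) := by
          rw [← Ex_sum, ← Ex_add]
          apply Ex_mono hp
          intro A _
          by_cases hc : ∀ s ∈ U2, ¬ B s A
          swap
          · have : h U2 A = 0 := by simp only [hh]; rw [if_neg hc]
            rw [this]; simp [h0]
          have h1 : h U2 A = 1 := by simp only [hh]; rw [if_pos hc]
          rw [h1]
          by_cases hc' : ∀ s ∈ U1, ¬ B s A
          · have : h U A = 1 := by
              simp only [hh]; rw [if_pos]
              intro s hs
              by_cases hd : Disjoint (D t) (D s)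
              · exact hc s (Finset.mem_filter.2 ⟨hs, hd⟩)
              · exact hc' s (Finset.mem_filter.2 ⟨hs, hd⟩)
            rw [this]
            have : 0 ≤ ∑ s ∈ U1, f s A * 1 := Finset.sum_nonneg fun s _ => by simp [f0]
            linarith
          · push Not at hc'
            obtain ⟨s, hs, hB⟩ := hc'
            have : (1 : ℝ) ≤ ∑ s ∈ U1, f s A * 1 := by
              calc (1 : ℝ) = f s A * 1 := by simp [hf, hB]
                _ ≤ _ := Finset.single_le_sum (f := fun s => f s A * 1)
                  (fun s _ => by simp [f0]) hs
            linarith [h0 U A]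
        have a2 : ∑ s ∈ U1, Ex p S (fun A => f s A * h U2 A) ≤
            ∑ s ∈ U1, 2 * q * Ex p S (h U2) := by
          apply Finset.sum_le_sum
          intro s hs
          exact IH _ hlt U2 rfl (hU2U.trans hUT) s (hUT (Finset.mem_filter.1 hs).1)
        rw [Finset.sum_const, nsmul_eq_mul] at a2
        have a3 : (U1.card : ℝ) ≤ d := by
          refine le_trans ?_ (hd t ht)
          exact_mod_cast Finset.card_le_card (Finset.filter_subset_filter _ hUT)
        have a4 := Ex_nonneg hp S (F := h U2) fun A _ => h0 U2 A
        have a5 : (U1.card : ℝ) * (2 * q * Ex p S (h U2)) ≤ 1 / 2 * Ex p S (h U2) := by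
          have : (U1.card : ℝ) * (2 * q) ≤ 1 / 2 := by nlinarith
          nlinarith
        linarith
    nlinarith
  have pos : ∀ U : Finset τ, U ⊆ T → 0 < Ex p S (h U) := by
    intro U
    induction U using Finset.induction_on with
    | empty => intro _; simp [hh, Ex_const]
    | insert t U htU ih =>
      intro hU
      have hU' : U ⊆ T := (Finset.subset_insert _ _).trans hU
      have ht : t ∈ T := hU (Finset.mem_insert_self _ _)
      have := ih hU'
      have hc := claim _ U rfl hU' t ht
      have : Ex p S (h U) ≤ Ex p S (h (insert t U)) + Ex p S (fun A => f t A * h U A) := by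
        rw [← Ex_add]
        apply Ex_mono hp
        intro A _
        simp only [hh, hf, Finset.forall_mem_insert]
        by_cases h1 : B t A <;> by_cases h2 : ∀ s ∈ U, ¬ B s A <;> simp [h1, h2]
      nlinarith
  have hpos := pos T (Finset.Subset.refl _)
  by_contra hcon
  push Not at hcon
  have : Ex p S (h T) = 0 := by
    rw [← Ex_const p S 0]
    apply Ex_congr
    intro A hA
    obtain ⟨t, ht, hB⟩ := hcon A hA
    simp only [hh]; rw [if_neg]
    push Not; exact ⟨t, ht, hB⟩
  linarith

end prob

/-- A set of (edge, colour) pairs can be completed to a colouring of all edges it involves. -/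
def Colourable {ι V : Type} (π : ι → Finset V) (R : ι → ι → Prop) (S : Finset ι) : Prop :=
  ∃ A, A ⊆ S ∧ (∀ i ∈ A, ∀ j ∈ A, ¬ R i j) ∧ ∀ i ∈ S, ∃ j ∈ A, π j = π i

/-- Abstract system of (edge, colour) pairs with the blocking relation `R`. -/
structure Sys {ι V : Type} (k : ℕ) (π : ι → Finset V) (R : ι → ι → Prop) (S : Finset ι) : Prop where
  symm : ∀ i ∈ S, ∀ j ∈ S, R i j → R j i
  ne : ∀ i ∈ S, ∀ j ∈ S, R i j → π i ≠ π j
  inc : ∀ i ∈ S, ∀ j ∈ S, R i j → ∃ v, v ∈ π i ∧ v ∈ π j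
  uniq : ∀ i ∈ S, ∀ j ∈ S, ∀ j' ∈ S, R i j → R i j' → π j = π j' → j = j'
  lin : ∀ i ∈ S, ∀ j ∈ S, π i ≠ π j → ∀ u v, u ∈ π i → u ∈ π j → v ∈ π i → v ∈ π j → u = v
  card : ∀ i ∈ S, (π i).card = k

lemma Sys.mono {ι V : Type} {k : ℕ} {π : ι → Finset V} {R : ι → ι → Prop} {S S' : Finset ι}
    (h : Sys k π R S) (hS : S' ⊆ S) : Sys k π R S' where
  symm i hi j hj := h.symm i (hS hi) j (hS hj)
  ne i hi j hj := h.ne i (hS hi) j (hS hj)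
  inc i hi j hj := h.inc i (hS hi) j (hS hj)
  uniq i hi j hj j' hj' := h.uniq i (hS hi) j (hS hj) j' (hS hj')
  lin i hi j hj := h.lin i (hS hi) j (hS hj)
  card i hi := h.card i (hS hi)

open Classical in
/-- The weight conditions. -/
structure Cond {ι V : Type} (π : ι → Finset V) (R : ι → ι → Prop) (S : Finset ι) (μ : ι → ℝ)
    (ρ lo hi : ℝ) : Prop where
  lo : ∀ i ∈ S, lo ≤ μ i
  hi : ∀ i ∈ S, μ i ≤ hi
  list : ∀ i ∈ S, ρ ≤ ∑ j ∈ S.filter (fun j => π j = π i), μ j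
  nb : ∀ i ∈ S, ∀ v ∈ π i, ∑ j ∈ S.filter (fun j => R i j ∧ v ∈ π j), μ j ≤ 1

section comb
open Classical
variable {ι V : Type}

lemma nsum_le {k : ℕ} {π : ι → Finset V} {R : ι → ι → Prop} {S : Finset ι} (hS : Sys k π R S)
    {μ : ι → ℝ} (hμ : ∀ i ∈ S, 0 ≤ μ i)
    (nb : ∀ i ∈ S, ∀ v ∈ π i, ∑ j ∈ S.filter (fun j => R i j ∧ v ∈ π j), μ j ≤ 1) (i : ι)
    (hi : i ∈ S) : ∑ j ∈ S.filter (fun j => R i j), μ j ≤ k := by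
  calc ∑ j ∈ S.filter (fun j => R i j), μ j
      ≤ ∑ j ∈ S, ∑ v ∈ π i, if R i j ∧ v ∈ π j then μ j else 0 := by
        rw [Finset.sum_filter]
        apply Finset.sum_le_sum
        intro j hj
        have h0 : ∀ v ∈ π i, 0 ≤ if R i j ∧ v ∈ π j then μ j else 0 := by
          intro v _; split_ifs
          · exact hμ j hj
          · exact le_rfl
        split_ifs with h
        · obtain ⟨v, hv, hv'⟩ := hS.inc i hi j hj h
          have := Finset.single_le_sum h0 hv
          simpa [h, hv'] using this
        · exact Finset.sum_nonneg h0
    _ = ∑ v ∈ π i, ∑ j ∈ S.filter (fun j => R i j ∧ v ∈ π j), μ j := by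
        rw [Finset.sum_comm]
        apply Finset.sum_congr rfl; intro v _; rw [Finset.sum_filter]
    _ ≤ ∑ v ∈ π i, 1 := Finset.sum_le_sum fun v hv => nb i hi v hv
    _ = k := by simp [hS.card i hi]

lemma sum_le_of_inj {α β : Type} {s : Finset α} {t : Finset β} (f : α → ℝ) (g : β → ℝ) (φ : α → β)
    (hφ : ∀ a ∈ s, φ a ∈ t) (inj : ∀ a ∈ s, ∀ b ∈ s, φ a = φ b → a = b)
    (hfg : ∀ a ∈ s, f a ≤ g (φ a)) (hg : ∀ b ∈ t, 0 ≤ g b) : ∑ a ∈ s, f a ≤ ∑ b ∈ t, g b := by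
  calc ∑ a ∈ s, f a ≤ ∑ a ∈ s, g (φ a) := Finset.sum_le_sum hfg
    _ = ∑ b ∈ s.image φ, g b := (Finset.sum_image fun a ha b hb h => inj a ha b hb h).symm
    _ ≤ _ := Finset.sum_le_sum_of_subset_of_nonneg (Finset.image_subset_iff.2 hφ)
      fun b hb _ => hg b hb

lemma base_case {k : ℕ} {π : ι → Finset V} {R : ι → ι → Prop} {S : Finset ι} (hS : Sys k π R S)
    {μ : ι → ℝ} {ρ lo hi : ℝ} (hlo : 0 < lo) (hρ : 0 < ρ) (hρk : 4 * k ≤ ρ)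
    (hC : Cond π R S μ ρ lo hi) : Colourable π R S := by
  have hμ : ∀ i ∈ S, 0 < μ i := fun i hi => lt_of_lt_of_le hlo (hC.lo i hi)
  set Col : Finset (Finset V) → Finset (Finset ι) := fun F => S.powerset.filter fun A =>
    (∀ i ∈ A, ∀ j ∈ A, ¬ R i j) ∧ (∀ i ∈ A, ∀ j ∈ A, π i = π j → i = j) ∧ A.image π = F with hCol
  set C : Finset (Finset V) → ℝ := fun F => ∑ A ∈ Col F, ∏ i ∈ A, μ i with hCdef
  have memCol : ∀ F A, A ∈ Col F ↔ A ⊆ S ∧ (∀ i ∈ A, ∀ j ∈ A, ¬ R i j) ∧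
      (∀ i ∈ A, ∀ j ∈ A, π i = π j → i = j) ∧ A.image π = F := by
    intro F A; simp only [hCol, Finset.mem_filter, Finset.mem_powerset]
  have hP0 : ∀ F, ∀ A ∈ Col F, 0 ≤ ∏ i ∈ A, μ i := by
    intro F A hA
    exact Finset.prod_nonneg fun i hi => (hμ i (((memCol F A).1 hA).1 hi)).le
  have hC0 : ∀ F, 0 ≤ C F := fun F => Finset.sum_nonneg (hP0 F)
  have step2 : ∀ F, ∀ j ∈ S, ∑ A ∈ (Col F).filter (fun A => j ∈ A), ∏ i ∈ A, μ i ≤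
      μ j * C (F.erase (π j)) := by
    intro F j hj
    rw [hCdef, Finset.mul_sum]
    apply sum_le_of_inj _ _ (fun A => A.erase j)
    · intro A hA
      obtain ⟨hA, hjA⟩ := Finset.mem_filter.1 hA
      obtain ⟨h1, h2, h3, h4⟩ := (memCol _ _).1 hA
      rw [memCol]
      have hsub := Finset.erase_subset j A
      refine ⟨hsub.trans h1, fun a ha b hb => h2 a (hsub ha) b (hsub hb),
        fun a ha b hb => h3 a (hsub ha) b (hsub hb), ?_⟩
      ext e
      simp only [Finset.mem_image, Finset.mem_erase, ← h4]
      constructor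
      · rintro ⟨a, ⟨ha, ha'⟩, rfl⟩
        exact ⟨fun h => ha (h3 a ha' j hjA h), a, ha', rfl⟩
      · rintro ⟨he, a, ha, rfl⟩
        exact ⟨a, ⟨fun h => he (by rw [h]), ha⟩, rfl⟩
    · intro A hA B hB h
      have hjA := (Finset.mem_filter.1 hA).2
      have hjB := (Finset.mem_filter.1 hB).2
      rw [← Finset.insert_erase hjA, ← Finset.insert_erase hjB, h]
    · intro A hA
      have hjA := (Finset.mem_filter.1 hA).2
      rw [Finset.mul_prod_erase A μ hjA]
    · intro A hA
      exact mul_nonneg (hμ j hj).le (hP0 _ A hA)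
  have claim : ∀ n : ℕ, ∀ F : Finset (Finset V), F.card = n → F ⊆ S.image π → ∀ e ∈ S.image π,
      e ∉ F → ρ / 2 * C F ≤ C (insert e F) := by
    intro n
    induction n using Nat.strong_induction_on with
    | _ n IH =>
    intro F hFn hFS e he heF
    have step3 : ∀ j ∈ S, ∑ A ∈ (Col F).filter (fun A => j ∈ A), ∏ i ∈ A, μ i ≤
        μ j * (2 / ρ * C F) := by
      intro j hj
      by_cases hjF : π j ∈ F
      · refine (step2 F j hj).trans (mul_le_mul_of_nonneg_left ?_ (hμ j hj).le)
        have := IH (F.erase (π j)).card (by rw [← hFn]; exact Finset.card_erase_lt_of_mem hjF)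
          (F.erase (π j)) rfl ((Finset.erase_subset _ _).trans hFS) (π j) (hFS hjF) (by simp)
        rw [Finset.insert_erase hjF] at this
        rw [div_mul_eq_mul_div, le_div_iff₀ hρ]; linarith
      · have : (Col F).filter (fun A => j ∈ A) = ∅ := by
          apply Finset.filter_false_of_mem
          intro A hA hjA
          obtain ⟨h1, h2, h3, h4⟩ := (memCol _ _).1 hA
          exact hjF (h4 ▸ Finset.mem_image_of_mem π hjA)
        rw [this]; simp only [Finset.sum_empty]
        have := hμ j hj
        have := hC0 F
        positivity
    set Le := S.filter (fun i => π i = e) with hLe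
    have step4 : ∀ i ∈ Le, 1 / 2 * C F ≤
        ∑ A ∈ (Col F).filter (fun A => ∀ j ∈ A, ¬ R i j), ∏ i ∈ A, μ i := by
      intro i hi
      have hiS : i ∈ S := (Finset.mem_filter.1 hi).1
      have a1 : C F ≤ ∑ A ∈ (Col F).filter (fun A => ∀ j ∈ A, ¬ R i j), ∏ i ∈ A, μ i +
          ∑ j ∈ S.filter (fun j => R i j),
            ∑ A ∈ (Col F).filter (fun A => j ∈ A), ∏ i ∈ A, μ i := by
        simp only [hCdef]
        rw [← Finset.sum_filter_add_sum_filter_not (Col F) (fun A => ∀ j ∈ A, ¬ R i j)]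
        gcongr
        rw [Finset.sum_sigma']
        apply sum_le_of_inj _ _ (fun A => if h : ∃ j ∈ A, R i j then ⟨h.choose, A⟩ else ⟨i, A⟩)
        · intro A hA
          obtain ⟨hA, h⟩ := Finset.mem_filter.1 hA
          push Not at h
          have hsp := h.choose_spec
          rw [dif_pos h]
          simp only [Finset.mem_sigma, Finset.mem_filter]
          exact ⟨⟨((memCol _ _).1 hA).1 hsp.1, hsp.2⟩, hA, hsp.1⟩
        · intro A hA B hB h
          have hA' := (Finset.mem_filter.1 hA).2
          have hB' := (Finset.mem_filter.1 hB).2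
          push Not at hA' hB'
          rw [dif_pos hA', dif_pos hB'] at h
          exact congrArg (fun x : (_ : ι) × Finset ι => x.2) h
        · intro A hA
          obtain ⟨hA, h⟩ := Finset.mem_filter.1 hA
          push Not at h
          rw [dif_pos h]
        · rintro ⟨j, A⟩ hA
          simp only [Finset.mem_sigma, Finset.mem_filter] at hA
          exact hP0 _ A hA.2.1
      have a2 : ∑ j ∈ S.filter (fun j => R i j),
            ∑ A ∈ (Col F).filter (fun A => j ∈ A), ∏ i ∈ A, μ i ≤
          ∑ j ∈ S.filter (fun j => R i j), μ j * (2 / ρ * C F) :=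
        Finset.sum_le_sum fun j hj => step3 j (Finset.mem_filter.1 hj).1
      rw [← Finset.sum_mul] at a2
      have a3 := nsum_le hS (fun i hi => (hμ i hi).le) hC.nb i hiS
      have a4 : (∑ j ∈ S.filter (fun j => R i j), μ j) * (2 / ρ * C F) ≤ 1 / 2 * C F := by
        have := hC0 F
        calc _ ≤ (k : ℝ) * (2 / ρ * C F) := by
              apply mul_le_mul_of_nonneg_right a3; positivity
          _ = (2 * k / ρ) * C F := by ring
          _ ≤ 1 / 2 * C F := by
              apply mul_le_mul_of_nonneg_right _ this
              rw [div_le_iff₀ hρ]; linarith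
      linarith
    obtain ⟨i0, hi0, hi0e⟩ := Finset.mem_image.1 he
    have step5 : ρ ≤ ∑ i ∈ Le, μ i := by
      have := hC.list i0 hi0
      rwa [hi0e] at this
    have step6 : ∑ i ∈ Le, ∑ A ∈ (Col F).filter (fun A => ∀ j ∈ A, ¬ R i j),
        μ i * ∏ i ∈ A, μ i ≤ C (insert e F) := by
      rw [Finset.sum_sigma']
      have hni : ∀ x ∈ Le.sigma (fun i => (Col F).filter (fun A => ∀ j ∈ A, ¬ R i j)),
          x.1 ∉ x.2 ∧ π x.1 = e ∧ (∀ j ∈ x.2, π j ≠ e) := by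
        rintro ⟨i, A⟩ hx
        simp only [Finset.mem_sigma, Finset.mem_filter, hLe] at hx
        obtain ⟨⟨hiS, hie⟩, hA, -⟩ := hx
        obtain ⟨h1, h2, h3, h4⟩ := (memCol _ _).1 hA
        have : ∀ j ∈ A, π j ≠ e := by
          intro j hj h
          exact heF (h4 ▸ h ▸ Finset.mem_image_of_mem π hj)
        exact ⟨fun h => this i h hie, hie, this⟩
      apply sum_le_of_inj _ _ (fun x => insert x.1 x.2)
      · rintro ⟨i, A⟩ hx
        obtain ⟨n1, n2, n3⟩ := hni _ hx
        simp only [Finset.mem_sigma, Finset.mem_filter, hLe] at hx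
        obtain ⟨⟨hiS, hie⟩, hA, hR⟩ := hx
        obtain ⟨h1, h2, h3, h4⟩ := (memCol _ _).1 hA
        rw [memCol]
        refine ⟨Finset.insert_subset hiS h1, ?_, ?_, ?_⟩
        · intro a ha b hb
          rcases Finset.mem_insert.1 ha with ha | ha <;> rcases Finset.mem_insert.1 hb with hb | hb
          · simp only at ha hb; subst ha; subst hb
            exact fun h => hS.ne _ hiS _ hiS h rfl
          · simp only at ha; subst ha; exact hR b hb
          · simp only at hb; subst hb
            exact fun h => hR a ha (hS.symm _ (h1 ha) _ hiS h)
          · exact h2 a ha b hb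
        · intro a ha b hb hab
          rcases Finset.mem_insert.1 ha with ha | ha <;> rcases Finset.mem_insert.1 hb with hb | hb
          · rw [ha, hb]
          · exact absurd (by rw [← hab, ha]; exact hie) (n3 b hb)
          · exact absurd (by rw [hab, hb]; exact hie) (n3 a ha)
          · exact h3 a ha b hb hab
        · rw [Finset.image_insert, h4, hie]
      · rintro ⟨i, A⟩ hx ⟨j, B⟩ hy h
        obtain ⟨n1, n2, n3⟩ := hni _ hx
        obtain ⟨m1, m2, m3⟩ := hni _ hy
        simp only at n1 n2 n3 m1 m2 m3 h
        have hij : i = j := by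
          have : i ∈ insert j B := h ▸ Finset.mem_insert_self i A
          rcases Finset.mem_insert.1 this with h' | h'
          · exact h'
          · exact absurd n2 (m3 i h')
        subst hij
        have : A = B := by
          rw [← Finset.erase_insert n1, ← Finset.erase_insert m1, h]
        subst this; rfl
      · rintro ⟨i, A⟩ hx
        obtain ⟨n1, n2, n3⟩ := hni _ hx
        simp only at n1 ⊢
        rw [Finset.prod_insert n1]
      · intro A hA; exact hP0 _ A hA
    calc ρ / 2 * C F = ρ * (1 / 2 * C F) := by ring
      _ ≤ (∑ i ∈ Le, μ i) * (1 / 2 * C F) :=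
          mul_le_mul_of_nonneg_right step5 (by have := hC0 F; positivity)
      _ = ∑ i ∈ Le, μ i * (1 / 2 * C F) := by rw [Finset.sum_mul]
      _ ≤ ∑ i ∈ Le, ∑ A ∈ (Col F).filter (fun A => ∀ j ∈ A, ¬ R i j), μ i * ∏ i ∈ A, μ i := by
          apply Finset.sum_le_sum
          intro i hi
          rw [← Finset.mul_sum]
          exact mul_le_mul_of_nonneg_left (step4 i hi) (hμ i (Finset.mem_filter.1 hi).1).le
      _ ≤ _ := step6
  have pos : ∀ F : Finset (Finset V), F ⊆ S.image π → 0 < C F := by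
    intro F
    induction F using Finset.induction_on with
    | empty =>
      intro _
      have : ∅ ∈ Col ∅ := by rw [memCol]; simp
      calc (0 : ℝ) < ∏ i ∈ (∅ : Finset ι), μ i := by simp
        _ ≤ _ := Finset.single_le_sum (f := fun A => ∏ i ∈ A, μ i) (hP0 ∅) this
    | insert e F heF ih =>
      intro h
      have hF := (Finset.subset_insert e F).trans h
      have := claim _ F rfl hF e (h (Finset.mem_insert_self _ _)) heF
      have := ih hF
      have : 0 < ρ / 2 * C F := by positivity
      linarith
  have hpos := pos _ (Finset.Subset.refl (S.image π))
  have hne : (Col (S.image π)).Nonempty := by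
    by_contra h
    rw [Finset.not_nonempty_iff_eq_empty] at h
    simp only [hCdef, h, Finset.sum_empty] at hpos
    exact lt_irrefl _ hpos
  obtain ⟨A, hA⟩ := hne
  obtain ⟨h1, h2, h3, h4⟩ := (memCol _ _).1 hA
  refine ⟨A, h1, h2, fun i hi => ?_⟩
  have : π i ∈ A.image π := h4 ▸ Finset.mem_image_of_mem π hi
  obtain ⟨j, hj, hji⟩ := Finset.mem_image.1 this
  exact ⟨j, hj, hji⟩

lemma exists_sub_sum (s : Finset ι) (μ : ι → ℝ) (ρ : ℝ) (hρ : 0 ≤ ρ) (hμ : ∀ i ∈ s, μ i ≤ ρ)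
    (hs : ρ ≤ ∑ i ∈ s, μ i) : ∃ t ⊆ s, ρ ≤ ∑ i ∈ t, μ i ∧ ∑ i ∈ t, μ i ≤ 2 * ρ := by
  induction s using Finset.induction_on with
  | empty =>
    refine ⟨∅, Finset.Subset.refl _, hs, ?_⟩
    simp; linarith
  | insert i s hi ih =>
    by_cases h : ρ ≤ ∑ i ∈ s, μ i
    · obtain ⟨t, ht, h1, h2⟩ := ih (fun j hj => hμ j (Finset.mem_insert_of_mem hj)) h
      exact ⟨t, ht.trans (Finset.subset_insert _ _), h1, h2⟩
    · refine ⟨insert i s, Finset.Subset.refl _, hs, ?_⟩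
      rw [Finset.sum_insert hi]
      have := hμ i (Finset.mem_insert_self _ _)
      linarith

/-- trimming the lists -/
lemma trim {π : ι → Finset V} {R : ι → ι → Prop} {S : Finset ι} {μ : ι → ℝ} {ρ lo hi : ℝ}
    (hlo : 0 < lo) (hρ : 0 < ρ) (hhi : hi ≤ ρ) (hC : Cond π R S μ ρ lo hi) :
    ∃ S', S' ⊆ S ∧ Cond π R S' μ ρ lo hi ∧ (∀ i ∈ S, ∃ j ∈ S', π j = π i) ∧
      ∀ i ∈ S', ∑ j ∈ S'.filter (fun j => π j = π i), μ j ≤ 2 * ρ := by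
  have hμ : ∀ i ∈ S, 0 < μ i := fun i hi => lt_of_lt_of_le hlo (hC.lo i hi)
  have key : ∀ e : Finset V, ∃ t, t ⊆ S.filter (fun j => π j = e) ∧ (e ∈ S.image π →
      ρ ≤ ∑ i ∈ t, μ i ∧ ∑ i ∈ t, μ i ≤ 2 * ρ) := by
    intro e
    by_cases he : e ∈ S.image π
    · obtain ⟨i, hi, rfl⟩ := Finset.mem_image.1 he
      obtain ⟨t, ht, h⟩ := exists_sub_sum (S.filter (fun j => π j = π i)) μ ρ hρ.le
        (fun j hj => (hC.hi j (Finset.mem_filter.1 hj).1).trans hhi) (hC.list i hi)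
      exact ⟨t, ht, fun _ => h⟩
    · exact ⟨∅, by simp, fun h => absurd h he⟩
  choose t ht1 ht2 using key
  set S' := S.filter (fun j => j ∈ t (π j)) with hS'
  have hsub : S' ⊆ S := Finset.filter_subset _ _
  have hfil : ∀ e, S'.filter (fun j => π j = e) = t e := by
    intro e; ext j
    simp only [hS', Finset.mem_filter]
    constructor
    · rintro ⟨⟨_, h⟩, rfl⟩; exact h
    · intro h
      have := Finset.mem_filter.1 (ht1 e h)
      exact ⟨⟨this.1, by rw [this.2]; exact h⟩, this.2⟩
  refine ⟨S', hsub, ⟨fun i hi => hC.lo i (hsub hi), fun i hi => hC.hi i (hsub hi), ?_, ?_⟩, ?_, ?_⟩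
  · intro i hi; rw [hfil]; exact (ht2 _ (Finset.mem_image_of_mem π (hsub hi))).1
  · intro i hi v hv
    refine le_trans (Finset.sum_le_sum_of_subset_of_nonneg (Finset.filter_subset_filter _ hsub) ?_)
      (hC.nb i (hsub hi) v hv)
    intro j hj _; exact (hμ j (Finset.mem_filter.1 hj).1).le
  · intro i hi
    have h1 := (ht2 _ (Finset.mem_image_of_mem π hi)).1
    have : (t (π i)).Nonempty := by
      by_contra h
      rw [Finset.not_nonempty_iff_eq_empty] at h
      rw [h] at h1; simp at h1; linarith
    obtain ⟨j, hj⟩ := this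
    rw [← hfil] at hj
    exact ⟨j, (Finset.mem_filter.1 hj).1, (Finset.mem_filter.1 hj).2⟩
  · intro i hi; rw [hfil]; exact (ht2 _ (Finset.mem_image_of_mem π (hsub hi))).2

end comb

section conc
open Classical
variable {ι V : Type}

lemma conc_up {p : ι → ℝ} (hp : ∀ i, 0 ≤ p i ∧ p i ≤ 1) (c : ι → ℝ) (l : ℝ) (hl : 0 ≤ l)
    (S : Finset ι) (F : Finset ι → ℝ) (hF : ∀ A, ∀ i ∈ S, |F (insert i A) - F A| ≤ c i)
    (hc : ∀ i ∈ S, l * c i ≤ 1) (W : ℝ) (hW : l ^ 2 * ∑ i ∈ S, p i * c i ^ 2 ≤ W) (t m : ℝ)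
    (hm : Ex p S F ≤ m) :
    Pr p S (fun A => m + t ≤ F A) ≤ Real.exp (- (l * t) + W) := by
  have h1 := Ex_mgf hp c l S F hF (by rwa [abs_of_nonneg hl])
  have h2 := Pr_markov hp S (fun A => m + t ≤ F A) (fun A => Real.exp (l * F A))
    (l * (m + t)) (fun A _ => (Real.exp_pos _).le)
    (fun A _ h => Real.exp_le_exp.2 (mul_le_mul_of_nonneg_left h hl))
  refine h2.trans ((mul_le_mul_of_nonneg_left h1 (Real.exp_pos _).le).trans ?_)
  rw [← Real.exp_add]
  apply Real.exp_le_exp.2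
  have := mul_le_mul_of_nonneg_left hm hl
  linarith

lemma conc_down {p : ι → ℝ} (hp : ∀ i, 0 ≤ p i ∧ p i ≤ 1) (c : ι → ℝ) (l : ℝ) (hl : 0 ≤ l)
    (S : Finset ι) (F : Finset ι → ℝ) (hF : ∀ A, ∀ i ∈ S, |F (insert i A) - F A| ≤ c i)
    (hc : ∀ i ∈ S, l * c i ≤ 1) (W : ℝ) (hW : l ^ 2 * ∑ i ∈ S, p i * c i ^ 2 ≤ W) (t m : ℝ)
    (hm : m ≤ Ex p S F) :
    Pr p S (fun A => F A ≤ m - t) ≤ Real.exp (- (l * t) + W) := by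
  have h0 : Ex p S (fun A => (-1) * F A) ≤ -m := by rw [Ex_mul_left]; linarith
  have := conc_up hp c l hl S (fun A => (-1) * F A) (fun A i hi => by
    have := hF A i hi
    rw [← abs_neg] at this
    convert this using 2; ring) hc W hW t (-m) h0
  refine le_trans (Pr_mono hp S ?_) this
  intro A _ h
  linarith

end conc

open Classical in
/-- Hypotheses for the analysis of one nibble. -/
structure Hyp {ι V : Type} (k : ℕ) (π : ι → Finset V) (R : ι → ι → Prop) (S : Finset ι) (μ : ι → ℝ)
    (ρ θ y : ℝ) (p : ι → ℝ) : Prop where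
  sys : Sys k π R S
  pos : ∀ i ∈ S, 0 ≤ μ i
  hi : ∀ i ∈ S, μ i ≤ 1 / y ^ 2
  listlo : ∀ i ∈ S, ρ ≤ ∑ j ∈ S.filter (fun j => π j = π i), μ j
  listhi : ∀ i ∈ S, ∑ j ∈ S.filter (fun j => π j = π i), μ j ≤ 2 * ρ
  nb : ∀ i ∈ S, ∀ v ∈ π i, ∑ j ∈ S.filter (fun j => R i j ∧ v ∈ π j), μ j ≤ 1
  θ0 : 0 ≤ θ
  θ1 : θ ≤ 1 / 2
  hy : k + 1 ≤ y
  hyθ : 2 * θ * k ≤ y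
  hp : ∀ i, 0 ≤ p i ∧ p i ≤ 1
  hpi : ∀ i ∈ S, p i = θ * μ i
  ρ0 : 0 ≤ ρ

section nibble
open Classical
variable {ι V : Type}

/-- total blocking weight -/
noncomputable def nw (R : ι → ι → Prop) (S : Finset ι) (μ : ι → ℝ) (j : ι) : ℝ :=
  ∑ l ∈ S.filter (fun l => R j l), μ l

/-- the equalizing factor -/
noncomputable def sf (k : ℕ) (R : ι → ι → Prop) (S : Finset ι) (μ : ι → ℝ) (θ : ℝ) (j : ι) : ℝ :=
  Real.exp (-(θ * (k - nw R S μ j)))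

variable {k : ℕ} {π : ι → Finset V} {R : ι → ι → Prop} {S : Finset ι} {μ : ι → ℝ}
    {ρ θ y : ℝ} {p : ι → ℝ}

lemma Hyp.y1 (H : Hyp k π R S μ ρ θ y p) : 1 ≤ y := by
  have := H.hy
  have : (0 : ℝ) ≤ k := Nat.cast_nonneg k
  linarith

lemma Hyp.nw_le (H : Hyp k π R S μ ρ θ y p) (j : ι) (hj : j ∈ S) : nw R S μ j ≤ k :=
  nsum_le H.sys H.pos H.nb j hj

lemma Hyp.nw_nonneg (H : Hyp k π R S μ ρ θ y p) (j : ι) : 0 ≤ nw R S μ j :=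
  Finset.sum_nonneg fun l hl => H.pos l (Finset.mem_filter.1 hl).1

lemma Hyp.sum_p (H : Hyp k π R S μ ρ θ y p) (T : Finset ι) (hT : T ⊆ S) :
    ∑ l ∈ T, p l = θ * ∑ l ∈ T, μ l := by
  rw [Finset.mul_sum]
  exact Finset.sum_congr rfl fun l hl => H.hpi l (hT hl)

lemma Hyp.sf_le (H : Hyp k π R S μ ρ θ y p) (j : ι) (hj : j ∈ S) : sf k R S μ θ j ≤ 1 := by
  unfold sf
  rw [Real.exp_le_one_iff]
  have := H.nw_le j hj
  have := mul_nonneg H.θ0 (by linarith : (0 : ℝ) ≤ k - nw R S μ j)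
  linarith

lemma sf_pos (j : ι) : 0 < sf k R S μ θ j := Real.exp_pos _

lemma sum_le_card {s : Finset ι} {f : ι → ℝ} {b : ℝ} {n : ℝ} (hf : ∀ i ∈ s, f i ≤ b) (hb : 0 ≤ b)
    (hn : (s.card : ℝ) ≤ n) : ∑ i ∈ s, f i ≤ n * b := by
  calc ∑ i ∈ s, f i ≤ ∑ i ∈ s, b := Finset.sum_le_sum hf
    _ = s.card * b := by simp
    _ ≤ n * b := mul_le_mul_of_nonneg_right hn hb

/-- Lipschitz bound for sums of emptiness indicators -/
lemma lip_sum (J : Finset ι) (a : ι → ℝ) (ha : ∀ j ∈ J, 0 ≤ a j) (T : ι → ι → Prop)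
    (A : Finset ι) (l : ι) :
    |(∑ j ∈ J, a j * if (∀ g ∈ insert l A, ¬ T j g) then 1 else 0) -
      ∑ j ∈ J, a j * if (∀ g ∈ A, ¬ T j g) then 1 else 0| ≤ ∑ j ∈ J.filter (fun j => T j l), a j := by
  rw [← Finset.sum_sub_distrib, Finset.sum_filter]
  refine (Finset.abs_sum_le_sum_abs _ _).trans (Finset.sum_le_sum fun j hj => ?_)
  rw [← mul_sub, abs_mul, abs_of_nonneg (ha j hj)]
  simp only [Finset.forall_mem_insert]
  by_cases h1 : T j l
  · rw [if_pos h1]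
    refine mul_le_of_le_one_right (ha j hj) ?_
    split_ifs <;> norm_num
  · rw [if_neg h1]
    by_cases h2 : ∀ g ∈ A, ¬ T j g
    · rw [if_pos ⟨h1, h2⟩, if_pos h2]; simp
    · rw [if_neg (fun h => h2 h.2), if_neg h2]; simp

lemma Ex_emp (p : ι → ℝ) (S : Finset ι) (T : ι → Prop) :
    Ex p S (fun A => if (∀ g ∈ A, ¬ T g) then 1 else 0) = ∏ l ∈ S.filter T, (1 - p l) := by
  rw [← Pr_empty p S _ (Finset.filter_subset T S)]
  unfold Pr
  apply Ex_congr
  intro A hA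
  have : (∀ g ∈ A, ¬ T g) ↔ (∀ j ∈ A, j ∉ S.filter T) := by
    apply forall₂_congr; intro g hg; simp [hA hg]
  by_cases h : ∀ g ∈ A, ¬ T g
  · rw [if_pos h, if_pos (this.1 h)]
  · rw [if_neg h, if_neg (fun h' => h (this.2 h'))]

lemma sum_swap_filter (J S : Finset ι) (a p : ι → ℝ) (T : ι → ι → Prop)
    [∀ j l, Decidable (T j l)] :
    ∑ l ∈ S, p l * ∑ j ∈ J.filter (fun j => T j l), a j =
      ∑ j ∈ J, a j * ∑ l ∈ S.filter (fun l => T j l), p l := by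
  simp only [Finset.sum_filter, Finset.mul_sum]
  rw [Finset.sum_comm]
  apply Finset.sum_congr rfl; intro j _
  apply Finset.sum_congr rfl; intro l _
  split_ifs <;> ring

/-- concentration of a sum of emptiness indicators: variance bound -/
lemma var_bound (H : Hyp k π R S μ ρ θ y p) (J : Finset ι) (hJ : J ⊆ S) (a : ι → ℝ)
    (ha : ∀ j ∈ J, 0 ≤ a j) (ha' : ∀ j ∈ J, a j ≤ μ j) (T : ι → ι → Prop) (n W : ℝ) (hn0 : 0 ≤ n)
    (hn : ∀ l ∈ S, ((J.filter (fun j => T j l)).card : ℝ) ≤ n) (hny : n ≤ y)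
    (hW : ∑ j ∈ J, μ j * ∑ l ∈ S.filter (fun l => T j l), p l ≤ W) :
    (∀ l ∈ S, y * ∑ j ∈ J.filter (fun j => T j l), a j ≤ 1) ∧
    y ^ 2 * ∑ l ∈ S, p l * (∑ j ∈ J.filter (fun j => T j l), a j) ^ 2 ≤ n * W := by
  have y1 := H.y1
  have hc : ∀ l ∈ S, ∑ j ∈ J.filter (fun j => T j l), a j ≤ n * (1 / y ^ 2) := by
    intro l hl
    apply sum_le_card _ (by positivity) (hn l hl)
    intro j hj
    have := (Finset.mem_filter.1 hj).1
    exact (ha' j this).trans (H.hi j (hJ this))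
  have hc0 : ∀ l, 0 ≤ ∑ j ∈ J.filter (fun j => T j l), a j := fun l =>
    Finset.sum_nonneg fun j hj => ha j (Finset.mem_filter.1 hj).1
  constructor
  · intro l hl
    calc _ ≤ y * (n * (1 / y ^ 2)) := mul_le_mul_of_nonneg_left (hc l hl) (by linarith)
      _ = n / y := by field_simp
      _ ≤ 1 := by rw [div_le_one (by linarith)]; exact hny
  · have e1 : ∑ l ∈ S, p l * (∑ j ∈ J.filter (fun j => T j l), a j) ^ 2 ≤
        ∑ l ∈ S, n * (1 / y ^ 2) * (p l * (∑ j ∈ J.filter (fun j => T j l), a j)) := by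
      apply Finset.sum_le_sum
      intro l hl
      have := mul_le_mul_of_nonneg_right (hc l hl) (mul_nonneg (H.hp l).1 (hc0 l))
      calc _ = (∑ j ∈ J.filter (fun j => T j l), a j) *
            (p l * (∑ j ∈ J.filter (fun j => T j l), a j)) := by ring
        _ ≤ _ := this
    rw [← Finset.mul_sum, sum_swap_filter] at e1
    have e2 : ∑ j ∈ J, a j * ∑ l ∈ S.filter (fun l => T j l), p l ≤ W := by
      refine le_trans (Finset.sum_le_sum fun j hj => ?_) hW
      exact mul_le_mul_of_nonneg_right (ha' j hj) (Finset.sum_nonneg fun l _ => (H.hp l).1)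
    calc _ ≤ y ^ 2 * (n * (1 / y ^ 2) * W) := by
          apply mul_le_mul_of_nonneg_left _ (by positivity)
          exact e1.trans (mul_le_mul_of_nonneg_left e2 (by positivity))
      _ = n * W := by field_simp

lemma one_sub_ge {q h : ℝ} (h0 : 0 ≤ q) (hq : q ≤ h) (h1 : h ≤ 1 / 2) :
    Real.exp (-(q * (1 + 2 * h))) ≤ 1 - q := by
  have hpos : 0 < 1 - q := by linarith
  have e1 : (1 - q)⁻¹ ≤ Real.exp (q / (1 - q)) := by
    have := Real.add_one_le_exp (q / (1 - q))
    calc (1 - q)⁻¹ = q / (1 - q) + 1 := by field_simp; ring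
      _ ≤ _ := this
  have e2 : q / (1 - q) ≤ q * (1 + 2 * h) := by
    rw [div_le_iff₀ hpos]
    have : 1 ≤ (1 + 2 * h) * (1 - q) := by nlinarith
    nlinarith
  rw [Real.exp_neg, inv_le_comm₀ (Real.exp_pos _) hpos]
  exact e1.trans (Real.exp_le_exp.2 e2)

/-- surviving list weight -/
noncomputable def Xf (k : ℕ) (π : ι → Finset V) (R : ι → ι → Prop) (S : Finset ι) (μ : ι → ℝ)
    (θ : ℝ) (i : ι) (A : Finset ι) : ℝ :=
  ∑ j ∈ S.filter (fun j => π j = π i), μ j * sf k R S μ θ j *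
    if (∀ g ∈ A, ¬ R j g) then 1 else 0

lemma Xf_tail (H : Hyp k π R S μ ρ θ y p) (i : ι) (hi : i ∈ S) (t : ℝ) :
    Pr p S (fun A => Xf k π R S μ θ i A ≤ ρ * Real.exp (-(θ * k) - 2 * θ ^ 2 * k / y ^ 2) - t) ≤
      Real.exp (-(y * t) + 2 * ρ * θ * k) := by
  have y1 := H.y1
  have θ0 := H.θ0
  set J := S.filter (fun j => π j = π i) with hJ
  have hJS : J ⊆ S := Finset.filter_subset _ _
  set a : ι → ℝ := fun j => μ j * sf k R S μ θ j with ha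
  have ha0 : ∀ j ∈ J, 0 ≤ a j := fun j hj => mul_nonneg (H.pos j (hJS hj)) (sf_pos j).le
  have ha1 : ∀ j ∈ J, a j ≤ μ j := fun j hj =>
    mul_le_of_le_one_right (H.pos j (hJS hj)) (H.sf_le j (hJS hj))
  obtain ⟨v1, v2⟩ := var_bound H J hJS a ha0 ha1 (fun j l => R j l) 1 (2 * ρ * θ * k) zero_le_one
    (by
      intro l hl
      have : (J.filter (fun j => R j l)).card ≤ 1 := by
        rw [Finset.card_le_one]
        intro b hb c hc
        simp only [hJ, Finset.mem_filter] at hb hc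
        exact H.sys.uniq l hl b hb.1.1 c hc.1.1 (H.sys.symm _ hb.1.1 _ hl hb.2)
          (H.sys.symm _ hc.1.1 _ hl hc.2) (hb.1.2.trans hc.1.2.symm)
      exact_mod_cast this) y1
    (by
      calc ∑ j ∈ J, μ j * ∑ l ∈ S.filter (fun l => R j l), p l ≤ ∑ j ∈ J, μ j * (θ * k) := by
            apply Finset.sum_le_sum
            intro j hj
            apply mul_le_mul_of_nonneg_left _ (H.pos j (hJS hj))
            rw [H.sum_p _ (Finset.filter_subset _ _)]
            exact mul_le_mul_of_nonneg_left (H.nw_le j (hJS hj)) θ0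
        _ = (∑ j ∈ J, μ j) * (θ * k) := by rw [Finset.sum_mul]
        _ ≤ (2 * ρ) * (θ * k) := mul_le_mul_of_nonneg_right (H.listhi i hi) (by positivity)
        _ = _ := by ring)
  rw [one_mul] at v2
  refine conc_down H.hp (fun l => ∑ j ∈ J.filter (fun j => R j l), a j) y (by linarith) S
    (Xf k π R S μ θ i) (fun A l _ => lip_sum J a ha0 (fun j l => R j l) A l) v1 _ v2 t _ ?_
  unfold Xf
  rw [Ex_sum]
  have key : ∀ j ∈ J, μ j * Real.exp (-(θ * k) - 2 * θ ^ 2 * k / y ^ 2) ≤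
      Ex p S (fun A => μ j * sf k R S μ θ j * if (∀ g ∈ A, ¬ R j g) then 1 else 0) := by
    intro j hj
    rw [Ex_mul_left, Ex_emp, mul_assoc (μ j)]
    apply mul_le_mul_of_nonneg_left _ (H.pos j (hJS hj))
    have e1 : ∏ l ∈ S.filter (fun l => R j l), Real.exp (-(p l * (1 + 2 * (θ / y ^ 2)))) ≤
        ∏ l ∈ S.filter (fun l => R j l), (1 - p l) := by
      apply Finset.prod_le_prod
      · intro l _; exact (Real.exp_pos _).le
      · intro l hl
        have hlS := (Finset.mem_filter.1 hl).1
        apply one_sub_ge (H.hp l).1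
        · rw [H.hpi l hlS]
          calc θ * μ l ≤ θ * (1 / y ^ 2) := mul_le_mul_of_nonneg_left (H.hi l hlS) θ0
            _ = _ := by ring
        · calc θ / y ^ 2 ≤ θ := div_le_self θ0 (one_le_pow₀ y1)
            _ ≤ _ := H.θ1
    rw [← Real.exp_sum, Finset.sum_neg_distrib, ← Finset.sum_mul,
      H.sum_p _ (Finset.filter_subset _ _)] at e1
    change Real.exp (-(θ * nw R S μ j * (1 + 2 * (θ / y ^ 2)))) ≤ _ at e1
    refine le_trans ?_ (mul_le_mul_of_nonneg_left e1 (sf_pos j).le)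
    unfold sf
    rw [← Real.exp_add]
    apply Real.exp_le_exp.2
    have n1 := H.nw_le j (hJS hj)
    have : 2 * θ ^ 2 * nw R S μ j / y ^ 2 ≤ 2 * θ ^ 2 * k / y ^ 2 := by gcongr
    have e3 : -(θ * (k - nw R S μ j)) + -(θ * nw R S μ j * (1 + 2 * (θ / y ^ 2))) =
      -(θ * k) - 2 * θ ^ 2 * nw R S μ j / y ^ 2 := by ring
    rw [e3]; linarith
  calc _ ≤ (∑ j ∈ J, μ j) * Real.exp (-(θ * k) - 2 * θ ^ 2 * k / y ^ 2) :=
        mul_le_mul_of_nonneg_right (H.listlo i hi) (Real.exp_pos _).le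
    _ = ∑ j ∈ J, μ j * Real.exp (-(θ * k) - 2 * θ ^ 2 * k / y ^ 2) := by rw [Finset.sum_mul]
    _ ≤ _ := Finset.sum_le_sum key

/-- `l` colours the edge of `j`, or blocks `j` from outside of `v` -/
def Tr (π : ι → Finset V) (R : ι → ι → Prop) (v : V) (j l : ι) : Prop :=
  π l = π j ∨ (R j l ∧ v ∉ π l)

/-- main part of the surviving neighbourhood weight -/
noncomputable def Yf (k : ℕ) (π : ι → Finset V) (R : ι → ι → Prop) (S : Finset ι) (μ : ι → ℝ)
    (θ : ℝ) (i : ι) (v : V) (A : Finset ι) : ℝ :=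
  ∑ j ∈ S.filter (fun j => R i j ∧ v ∈ π j), μ j * sf k R S μ θ j *
    if (∀ g ∈ A, ¬ Tr π R v j g) then 1 else 0

lemma Yf_tail (H : Hyp k π R S μ ρ θ y p) (i : ι) (hi : i ∈ S) (v : V) (hv : v ∈ π i) (t : ℝ) :
    Pr p S (fun A => Real.exp (-(θ * (ρ + k - 1))) + t ≤ Yf k π R S μ θ i v A) ≤
      Real.exp (-(y * t) + (k + 1) * (θ * (2 * ρ + k))) := by
  have y1 := H.y1
  have θ0 := H.θ0
  set J := S.filter (fun j => R i j ∧ v ∈ π j) with hJ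
  have hJS : J ⊆ S := Finset.filter_subset _ _
  set a : ι → ℝ := fun j => μ j * sf k R S μ θ j with ha
  have ha0 : ∀ j ∈ J, 0 ≤ a j := fun j hj => mul_nonneg (H.pos j (hJS hj)) (sf_pos j).le
  have ha1 : ∀ j ∈ J, a j ≤ μ j := fun j hj =>
    mul_le_of_le_one_right (H.pos j (hJS hj)) (H.sf_le j (hJS hj))
  have hJ1 : ∑ j ∈ J, μ j ≤ 1 := H.nb i hi v hv
  have Tsplit : ∀ j ∈ J, ∑ l ∈ S.filter (fun l => Tr π R v j l), p l =
      θ * (∑ l ∈ S.filter (fun l => π l = π j), μ l + (nw R S μ j -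
        ∑ l ∈ S.filter (fun l => R j l ∧ v ∈ π l), μ l)) := by
    intro j hj
    rw [H.sum_p _ (Finset.filter_subset _ _)]
    congr 1
    unfold nw
    simp only [Finset.sum_filter]
    rw [← Finset.sum_sub_distrib, ← Finset.sum_add_distrib]
    apply Finset.sum_congr rfl
    intro l hl
    by_cases h1 : π l = π j
    · have h2 : ¬ R j l := fun h => H.sys.ne j (hJS hj) l hl h h1.symm
      rw [if_pos (show Tr π R v j l from Or.inl h1)]
      simp [h1, h2]
    · by_cases h2 : R j l
      · by_cases h3 : v ∈ π l
        · rw [if_neg (show ¬ Tr π R v j l from fun h => h.elim h1 (fun h => h.2 h3))]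
          simp [h1, h2, h3]
        · rw [if_pos (show Tr π R v j l from Or.inr ⟨h2, h3⟩)]
          simp [h1, h2, h3]
      · rw [if_neg (show ¬ Tr π R v j l from fun h => h.elim h1 (fun h => h2 h.1))]
        simp [h1, h2]
  obtain ⟨v1, v2⟩ := var_bound H J hJS a ha0 ha1 (fun j l => Tr π R v j l) (k + 1) (θ * (2 * ρ + k)) (by positivity)
    (by
      intro l hl
      have h1 : (J.filter (fun j => π l = π j)).card ≤ 1 := by
        rw [Finset.card_le_one]
        intro b hb c hc
        simp only [hJ, Finset.mem_filter] at hb hc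
        exact H.sys.uniq i hi b hb.1.1 c hc.1.1 hb.1.2.1 hc.1.2.1 (hb.2.symm.trans hc.2)
      have h2 : (J.filter (fun j => R j l ∧ v ∉ π l)).card ≤ k := by
        rw [← H.sys.card l hl]
        have ex : ∀ j ∈ J.filter (fun j => R j l ∧ v ∉ π l), ∃ u, u ∈ π j ∧ u ∈ π l := by
          intro j hj
          obtain ⟨h1, h2, h3⟩ := Finset.mem_filter.1 hj
          exact H.sys.inc j (hJS h1) l hl h2
        apply Finset.card_le_card_of_injOn
          (fun j => if h : ∃ u, u ∈ π j ∧ u ∈ π l then h.choose else v)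
        · intro j hj
          have h := ex j hj
          simp only
          rw [dif_pos h]; exact h.choose_spec.2
        · intro b hb c hc hbc
          have hb' := ex b hb
          have hc' := ex c hc
          simp only at hbc
          rw [dif_pos hb', dif_pos hc'] at hbc
          have hub := hb'.choose_spec
          have huc := hc'.choose_spec
          simp only [hJ, Finset.coe_filter, Finset.mem_filter, Set.mem_ofPred_eq] at hb hc
          apply H.sys.uniq i hi b hb.1.1 c hc.1.1 hb.1.2.1 hc.1.2.1
          by_contra hne
          have := H.sys.lin b hb.1.1 c hc.1.1 hne _ v hub.1 (hbc ▸ huc.1) hb.1.2.2 hc.1.2.2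
          exact hb.2.2 (this ▸ hub.2)
      have h3 : (J.filter (fun j => Tr π R v j l)).card ≤ 1 + k := by
        refine le_trans (Finset.card_le_card ?_) ((Finset.card_union_le _ _).trans (add_le_add h1 h2))
        intro j hj
        obtain ⟨hj1, hj2⟩ := Finset.mem_filter.1 hj
        rw [Finset.mem_union]
        exact hj2.imp (fun h => Finset.mem_filter.2 ⟨hj1, h⟩) (fun h => Finset.mem_filter.2 ⟨hj1, h⟩)
      have : ((J.filter (fun j => Tr π R v j l)).card : ℝ) ≤ 1 + k := by exact_mod_cast h3
      linarith) H.hy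
    (by
      calc ∑ j ∈ J, μ j * ∑ l ∈ S.filter (fun l => Tr π R v j l), p l
          ≤ ∑ j ∈ J, μ j * (θ * (2 * ρ + k)) := by
            apply Finset.sum_le_sum
            intro j hj
            apply mul_le_mul_of_nonneg_left _ (H.pos j (hJS hj))
            rw [Tsplit j hj]
            apply mul_le_mul_of_nonneg_left _ θ0
            have := H.listhi j (hJS hj)
            have := H.nw_le j (hJS hj)
            have : 0 ≤ ∑ l ∈ S.filter (fun l => R j l ∧ v ∈ π l), μ l :=
              Finset.sum_nonneg fun l hl => H.pos l (Finset.mem_filter.1 hl).1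
            linarith
        _ = (∑ j ∈ J, μ j) * (θ * (2 * ρ + k)) := by rw [Finset.sum_mul]
        _ ≤ 1 * (θ * (2 * ρ + k)) := by
            have := H.ρ0
            exact mul_le_mul_of_nonneg_right hJ1 (by positivity)
        _ = _ := by ring)
  refine conc_up H.hp (fun l => ∑ j ∈ J.filter (fun j => Tr π R v j l), a j) y (by linarith) S
    (Yf k π R S μ θ i v) (fun A l _ => lip_sum J a ha0 (fun j l => Tr π R v j l) A l) v1 _ v2 t _ ?_
  unfold Yf
  rw [Ex_sum]
  have key : ∀ j ∈ J, Ex p S (fun A => μ j * sf k R S μ θ j *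
      if (∀ g ∈ A, ¬ Tr π R v j g) then 1 else 0) ≤
      μ j * Real.exp (-(θ * (ρ + k - 1))) := by
    intro j hj
    rw [Ex_mul_left, Ex_emp p S (fun g => Tr π R v j g), mul_assoc (μ j)]
    apply mul_le_mul_of_nonneg_left _ (H.pos j (hJS hj))
    have e1 : ∏ l ∈ S.filter (fun l => Tr π R v j l), (1 - p l) ≤
        ∏ l ∈ S.filter (fun l => Tr π R v j l), Real.exp (-(p l)) := by
      apply Finset.prod_le_prod
      · intro l _; linarith [(H.hp l).2]
      · intro l hl
        have := Real.add_one_le_exp (-(p l))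
        linarith
    rw [← Real.exp_sum, Finset.sum_neg_distrib, Tsplit j hj] at e1
    refine le_trans (mul_le_mul_of_nonneg_left e1 (sf_pos j).le) ?_
    unfold sf
    rw [← Real.exp_add]
    apply Real.exp_le_exp.2
    have b1 := H.listlo j (hJS hj)
    have b2 := H.nb j (hJS hj) v (Finset.mem_filter.1 hj).2.2
    have := mul_le_mul_of_nonneg_left b1 θ0
    have := mul_le_mul_of_nonneg_left b2 θ0
    nlinarith
  calc _ ≤ ∑ j ∈ J, μ j * Real.exp (-(θ * (ρ + k - 1))) := Finset.sum_le_sum key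
    _ = (∑ j ∈ J, μ j) * Real.exp (-(θ * (ρ + k - 1))) := by rw [Finset.sum_mul]
    _ ≤ 1 * Real.exp (-(θ * (ρ + k - 1))) := mul_le_mul_of_nonneg_right hJ1 (Real.exp_pos _).le
    _ = _ := one_mul _

end nibble

section quad
open Classical
variable {ι V : Type}

/-- closed neighbourhood -/
noncomputable def nbr (π : ι → Finset V) (R : ι → ι → Prop) (S : Finset ι) (i : ι) : Finset ι :=
  S.filter (fun j => π j = π i ∨ R i j)

/-- ball of radius three -/
noncomputable def ball3 (π : ι → Finset V) (R : ι → ι → Prop) (S : Finset ι) (i : ι) : Finset ι :=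
  (nbr π R S i).biUnion fun j => (nbr π R S j).biUnion fun l => nbr π R S l

variable {k : ℕ} {π : ι → Finset V} {R : ι → ι → Prop} {S : Finset ι} {μ : ι → ℝ}
    {ρ θ y : ℝ} {p : ι → ℝ}

lemma mem_nbr {i j : ι} : j ∈ nbr π R S i ↔ j ∈ S ∧ (π j = π i ∨ R i j) := Finset.mem_filter

lemma mem_ball3 {i x : ι} : x ∈ ball3 π R S i ↔
    ∃ j ∈ nbr π R S i, ∃ l ∈ nbr π R S j, x ∈ nbr π R S l := by
  simp only [ball3, Finset.mem_biUnion]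

lemma ball3_sub (i : ι) : ball3 π R S i ⊆ S := by
  intro x hx
  obtain ⟨j, _, l, _, h⟩ := mem_ball3.1 hx
  exact (mem_nbr.1 h).1

lemma nbr_symm (hS : Sys k π R S) {i j : ι} (hi : i ∈ S) (h : j ∈ nbr π R S i) :
    i ∈ nbr π R S j := by
  obtain ⟨hj, h⟩ := mem_nbr.1 h
  exact mem_nbr.2 ⟨hi, h.imp Eq.symm (hS.symm i hi j hj)⟩

lemma ball3_symm (hS : Sys k π R S) {i x : ι} (hi : i ∈ S) (h : x ∈ ball3 π R S i) :
    i ∈ ball3 π R S x := by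
  obtain ⟨j, hj, l, hl, hx⟩ := mem_ball3.1 h
  have hjS := (mem_nbr.1 hj).1
  have hlS := (mem_nbr.1 hl).1
  exact mem_ball3.2 ⟨l, nbr_symm hS hlS hx, j, nbr_symm hS hjS hl, nbr_symm hS hi hj⟩

lemma self_nbr {i : ι} (hi : i ∈ S) : i ∈ nbr π R S i := mem_nbr.2 ⟨hi, Or.inl rfl⟩

lemma ball3_card {N : ℕ} (hN : ∀ i ∈ S, (nbr π R S i).card ≤ N) {i : ι} (hi : i ∈ S) :
    (ball3 π R S i).card ≤ N ^ 3 := by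
  have : N ^ 3 = N * (N * N) := by ring
  rw [this]
  refine (Finset.card_biUnion_le_card_mul _ _ (N * N) ?_).trans (Nat.mul_le_mul_right _ (hN i hi))
  intro j hj
  have hjS := (mem_nbr.1 hj).1
  refine (Finset.card_biUnion_le_card_mul _ _ N ?_).trans (Nat.mul_le_mul_right _ (hN j hjS))
  intro l hl
  exact hN l (mem_nbr.1 hl).1

lemma ball6_card (hS : Sys k π R S) {N : ℕ} (hN : ∀ i ∈ S, (nbr π R S i).card ≤ N) {i : ι}
    (hi : i ∈ S) : (S.filter fun s => ¬ Disjoint (ball3 π R S i) (ball3 π R S s)).card ≤ N ^ 6 := by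
  have : N ^ 6 = N ^ 3 * N ^ 3 := by ring
  rw [this]
  refine le_trans (Finset.card_le_card (t := (ball3 π R S i).biUnion fun x => ball3 π R S x) ?_)
    ((Finset.card_biUnion_le_card_mul _ _ (N ^ 3) ?_).trans
      (Nat.mul_le_mul_right _ (ball3_card hN hi)))
  · intro s hs
    obtain ⟨hsS, hs⟩ := Finset.mem_filter.1 hs
    rw [Finset.not_disjoint_iff] at hs
    obtain ⟨x, hx, hx'⟩ := hs
    exact Finset.mem_biUnion.2 ⟨x, hx, ball3_symm hS hsS hx'⟩
  · intro x hx
    exact ball3_card hN (ball3_sub _ hx)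

/-- weight of the colour at the edge of `l` which is blocked by `i` -/
noncomputable def wf (π : ι → Finset V) (R : ι → ι → Prop) (S : Finset ι) (μ : ι → ℝ)
    (i : ι) (v : V) (l : ι) : ℝ :=
  ∑ j ∈ (S.filter (fun j => R i j ∧ v ∈ π j)).filter (fun j => π l = π j), μ j

/-- the quadratic error term -/
noncomputable def qf (π : ι → Finset V) (R : ι → ι → Prop) (S : Finset ι) (μ : ι → ℝ)
    (i : ι) (v : V) (A : Finset ι) : ℝ :=
  ∑ l ∈ A, ∑ g ∈ A, if R l g then wf π R S μ i v l else 0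

/-- coefficients of the quadratic error term -/
noncomputable def af (π : ι → Finset V) (R : ι → ι → Prop) (S : Finset ι) (μ : ι → ℝ)
    (i : ι) (v : V) (l g : ι) : ℝ :=
  if R l g then wf π R S μ i v l + wf π R S μ i v g else 0

lemma wf_nonneg (H : Hyp k π R S μ ρ θ y p) (i : ι) (v : V) (l : ι) : 0 ≤ wf π R S μ i v l :=
  Finset.sum_nonneg fun j hj => H.pos j (Finset.mem_filter.1 (Finset.mem_filter.1 hj).1).1

lemma wf_le (H : Hyp k π R S μ ρ θ y p) (i : ι) (hi : i ∈ S) (v : V) (l : ι) :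
    wf π R S μ i v l ≤ 1 / y ^ 2 := by
  have y1 := H.y1
  have := sum_le_card (s := (S.filter (fun j => R i j ∧ v ∈ π j)).filter (fun j => π l = π j))
    (f := μ) (b := 1 / y ^ 2) (n := 1) (fun j hj =>
      H.hi j (Finset.mem_filter.1 (Finset.mem_filter.1 hj).1).1) (by positivity) (by
      have h1 : ((S.filter (fun j => R i j ∧ v ∈ π j)).filter (fun j => π l = π j)).card ≤ 1 := by
        rw [Finset.card_le_one]
        intro b hb c hc
        simp only [Finset.mem_filter] at hb hc
        exact H.sys.uniq i hi b hb.1.1 c hc.1.1 hb.1.2.1 hc.1.2.1 (hb.2.symm.trans hc.2)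
      exact_mod_cast h1)
  rw [one_mul] at this
  exact this

lemma wf_ne {i : ι} {v : V} {l : ι} (h : wf π R S μ i v l ≠ 0) :
    ∃ j ∈ S, R i j ∧ π l = π j := by
  obtain ⟨j, hj, _⟩ := Finset.exists_ne_zero_of_sum_ne_zero h
  simp only [Finset.mem_filter] at hj
  exact ⟨j, hj.1.1, hj.1.2.1, hj.2⟩

lemma af_nonneg (H : Hyp k π R S μ ρ θ y p) (i : ι) (v : V) (l g : ι) :
    0 ≤ af π R S μ i v l g := by
  unfold af
  split_ifs
  · exact add_nonneg (wf_nonneg H i v l) (wf_nonneg H i v g)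
  · exact le_rfl

lemma af_ne (H : Hyp k π R S μ ρ θ y p) {i : ι} {v : V} {l g : ι} (hl : l ∈ S)
    (hg : g ∈ S) (h : af π R S μ i v l g ≠ 0) : l ∈ ball3 π R S i := by
  unfold af at h
  by_cases h1 : R l g
  · rw [if_pos h1] at h
    have : wf π R S μ i v l ≠ 0 ∨ wf π R S μ i v g ≠ 0 := by
      by_contra hc
      push Not at hc
      rw [hc.1, hc.2] at h
      simp at h
    rcases this with h | h
    · obtain ⟨j, hj, hij, hlj⟩ := wf_ne h
      exact mem_ball3.2 ⟨j, mem_nbr.2 ⟨hj, Or.inr hij⟩, l, mem_nbr.2 ⟨hl, Or.inl hlj⟩, self_nbr hl⟩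
    · obtain ⟨j, hj, hij, hgj⟩ := wf_ne h
      exact mem_ball3.2 ⟨j, mem_nbr.2 ⟨hj, Or.inr hij⟩, g, mem_nbr.2 ⟨hg, Or.inl hgj⟩,
        mem_nbr.2 ⟨hl, Or.inr (H.sys.symm l hl g hg h1)⟩⟩
  · rw [if_neg h1] at h
    exact absurd rfl h

lemma qf_insert (H : Hyp k π R S μ ρ θ y p) (i : ι) (v : V) (l : ι) (hl : l ∈ S)
    (A : Finset ι) (hA : A ⊆ S) (hlA : l ∉ A) :
    qf π R S μ i v (insert l A) ≤ qf π R S μ i v A + ∑ g ∈ A, af π R S μ i v l g := by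
  unfold qf
  have hll : ¬ R l l := fun h => H.sys.ne l hl l hl h rfl
  rw [Finset.sum_insert hlA, Finset.sum_insert hlA, if_neg hll, zero_add]
  have e1 : ∑ x ∈ A, ∑ g ∈ insert l A, (if R x g then wf π R S μ i v x else 0) =
      ∑ x ∈ A, (if R x l then wf π R S μ i v x else 0) +
        ∑ x ∈ A, ∑ g ∈ A, (if R x g then wf π R S μ i v x else 0) := by
    rw [← Finset.sum_add_distrib]
    exact Finset.sum_congr rfl fun x _ => Finset.sum_insert hlA
  rw [e1, ← add_assoc, ← Finset.sum_add_distrib, add_comm]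
  apply add_le_add le_rfl
  apply Finset.sum_le_sum
  intro g hg
  have : R g l ↔ R l g := ⟨H.sys.symm g (hA hg) l hl, H.sys.symm l hl g (hA hg)⟩
  unfold af
  by_cases h : R l g
  · rw [if_pos h, if_pos (this.2 h), if_pos h]
  · rw [if_neg h, if_neg (fun h' => h (this.1 h')), if_neg h, add_zero]

lemma af_sum_le (H : Hyp k π R S μ ρ θ y p) (i : ι) (hi : i ∈ S) (v : V) (l : ι) (A : Finset ι)
    (hA : ((A.filter (R l)).card : ℝ) ≤ y) :
    y / 2 * ∑ g ∈ A, af π R S μ i v l g ≤ 1 := by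
  have y1 := H.y1
  have : ∑ g ∈ A, af π R S μ i v l g ≤ y * (2 / y ^ 2) := by
    unfold af
    rw [← Finset.sum_filter]
    apply sum_le_card _ (by positivity) hA
    intro g _
    have h1 := wf_le H i hi v l
    have h2 := wf_le H i hi v g
    calc _ ≤ 1 / y ^ 2 + 1 / y ^ 2 := add_le_add h1 h2
      _ = _ := by ring
  calc _ ≤ y / 2 * (y * (2 / y ^ 2)) := mul_le_mul_of_nonneg_left this (by linarith)
    _ = 1 := by field_simp

lemma deg_tail (H : Hyp k π R S μ ρ θ y p) (l : ι) (hl : l ∈ S) :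
    Pr p S (fun A => y ≤ ((A.filter (R l)).card : ℝ)) ≤ Real.exp (-y + 2 * θ * k) := by
  have h1 := Ex_lin H.hp (fun g => if R l g then (1 : ℝ) else 0) S 1 (by
    intro g _; split_ifs <;> norm_num)
  have h2 := Pr_markov H.hp S (fun A => y ≤ ((A.filter (R l)).card : ℝ))
    (fun A => Real.exp (1 * ∑ g ∈ A, if R l g then (1 : ℝ) else 0)) y
    (fun A _ => (Real.exp_pos _).le) (fun A _ h => by
      apply Real.exp_le_exp.2
      rw [one_mul, ← Finset.sum_filter]
      simpa using h)
  refine h2.trans ((mul_le_mul_of_nonneg_left h1 (Real.exp_pos _).le).trans ?_)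
  rw [← Real.exp_add]
  apply Real.exp_le_exp.2
  have : ∑ g ∈ S, p g * (if R l g then (1 : ℝ) else 0) = θ * nw R S μ l := by
    unfold nw
    rw [← H.sum_p _ (Finset.filter_subset _ _), Finset.sum_filter]
    exact Finset.sum_congr rfl fun g _ => by split_ifs <;> simp
  rw [this]
  have := mul_le_mul_of_nonneg_left (H.nw_le l hl) H.θ0
  linarith

lemma sum_pw (H : Hyp k π R S μ ρ θ y p) (i : ι) (hi : i ∈ S) (v : V) (hv : v ∈ π i) :
    ∑ l ∈ S, p l * wf π R S μ i v l ≤ 2 * θ * ρ := by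
  unfold wf
  rw [sum_swap_filter (S.filter (fun j => R i j ∧ v ∈ π j)) S μ p (fun j l => π l = π j)]
  have θ0 := H.θ0
  have ρ0 := H.ρ0
  calc _ ≤ ∑ j ∈ S.filter (fun j => R i j ∧ v ∈ π j), μ j * (2 * θ * ρ) := by
        apply Finset.sum_le_sum
        intro j hj
        have hjS := (Finset.mem_filter.1 hj).1
        apply mul_le_mul_of_nonneg_left _ (H.pos j hjS)
        rw [H.sum_p _ (Finset.filter_subset _ _)]
        have := mul_le_mul_of_nonneg_left (H.listhi j hjS) θ0
        linarith
    _ = (∑ j ∈ S.filter (fun j => R i j ∧ v ∈ π j), μ j) * (2 * θ * ρ) := by rw [Finset.sum_mul]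
    _ ≤ 1 * (2 * θ * ρ) := mul_le_mul_of_nonneg_right (H.nb i hi v hv) (by positivity)
    _ = _ := one_mul _

/-- linear coefficient -/
noncomputable def uf (π : ι → Finset V) (R : ι → ι → Prop) (S : Finset ι) (μ : ι → ℝ) (p : ι → ℝ)
    (i : ι) (v : V) (g : ι) : ℝ := ∑ l ∈ S, p l * af π R S μ i v l g

lemma uf_le (H : Hyp k π R S μ ρ θ y p) (i : ι) (hi : i ∈ S) (v : V) (g : ι) (hg : g ∈ S) :
    0 ≤ y * uf π R S μ p i v g ∧ y * uf π R S μ p i v g ≤ 1 := by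
  have y1 := H.y1
  have θ0 := H.θ0
  have h0 : 0 ≤ uf π R S μ p i v g :=
    Finset.sum_nonneg fun l _ => mul_nonneg (H.hp l).1 (af_nonneg H i v l g)
  refine ⟨mul_nonneg (by linarith) h0, ?_⟩
  have : uf π R S μ p i v g ≤ (θ * k) * (2 / y ^ 2) := by
    calc uf π R S μ p i v g ≤ ∑ l ∈ S, (if R g l then p l else 0) * (2 / y ^ 2) := by
          apply Finset.sum_le_sum
          intro l hl
          have hs : R g l ↔ R l g := ⟨H.sys.symm g hg l hl, H.sys.symm l hl g hg⟩
          unfold af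
          by_cases h : R l g
          · rw [if_pos h, if_pos (hs.2 h)]
            apply mul_le_mul_of_nonneg_left _ (H.hp l).1
            have h1 := wf_le H i hi v l
            have h2 := wf_le H i hi v g
            calc _ ≤ 1 / y ^ 2 + 1 / y ^ 2 := add_le_add h1 h2
              _ = _ := by ring
          · rw [if_neg h, if_neg (fun h' => h (hs.1 h'))]; simp
      _ = (∑ l ∈ S.filter (fun l => R g l), p l) * (2 / y ^ 2) := by
          rw [← Finset.sum_mul, Finset.sum_filter]
      _ ≤ _ := by
          apply mul_le_mul_of_nonneg_right _ (by positivity)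
          rw [H.sum_p _ (Finset.filter_subset _ _)]
          exact mul_le_mul_of_nonneg_left (H.nw_le g hg) θ0
  calc _ ≤ y * ((θ * k) * (2 / y ^ 2)) := mul_le_mul_of_nonneg_left this (by linarith)
    _ = (2 * θ * k) / y := by field_simp
    _ ≤ 1 := by rw [div_le_one (by linarith)]; exact H.hyθ

lemma uf_mean (H : Hyp k π R S μ ρ θ y p) (i : ι) (hi : i ∈ S) (v : V) (hv : v ∈ π i) :
    ∑ g ∈ S, p g * uf π R S μ p i v g ≤ 4 * k * ρ * θ ^ 2 := by
  have θ0 := H.θ0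
  have half : ∑ l ∈ S, ∑ g ∈ S, p l * p g * (if R l g then wf π R S μ i v l else 0) ≤
      2 * k * ρ * θ ^ 2 := by
    calc _ ≤ ∑ l ∈ S, (p l * wf π R S μ i v l) * (θ * k) := by
          apply Finset.sum_le_sum
          intro l hl
          have : ∑ g ∈ S, p l * p g * (if R l g then wf π R S μ i v l else 0) =
              (p l * wf π R S μ i v l) * ∑ g ∈ S.filter (fun g => R l g), p g := by
            rw [Finset.sum_filter, Finset.mul_sum]
            exact Finset.sum_congr rfl fun g _ => by split_ifs <;> ring
          rw [this]
          apply mul_le_mul_of_nonneg_left _ (mul_nonneg (H.hp l).1 (wf_nonneg H i v l))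
          rw [H.sum_p _ (Finset.filter_subset _ _)]
          exact mul_le_mul_of_nonneg_left (H.nw_le l hl) θ0
      _ = (∑ l ∈ S, p l * wf π R S μ i v l) * (θ * k) := by rw [Finset.sum_mul]
      _ ≤ (2 * θ * ρ) * (θ * k) := mul_le_mul_of_nonneg_right (sum_pw H i hi v hv) (by positivity)
      _ = _ := by ring
  have eq : ∑ g ∈ S, p g * uf π R S μ p i v g =
      ∑ l ∈ S, ∑ g ∈ S, p l * p g * (if R l g then wf π R S μ i v l else 0) +
      ∑ l ∈ S, ∑ g ∈ S, p l * p g * (if R l g then wf π R S μ i v l else 0) := by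
    conv_rhs => arg 1; rw [Finset.sum_comm]
    rw [← Finset.sum_add_distrib]
    apply Finset.sum_congr rfl
    intro g hg
    unfold uf
    rw [Finset.mul_sum, ← Finset.sum_add_distrib]
    apply Finset.sum_congr rfl
    intro l hl
    have hs : R g l ↔ R l g := ⟨H.sys.symm g hg l hl, H.sys.symm l hl g hg⟩
    unfold af
    by_cases h : R l g
    · rw [if_pos h, if_pos h, if_pos (hs.2 h)]; ring
    · rw [if_neg h, if_neg h, if_neg (fun h' => h (hs.1 h'))]; ring
  rw [eq]; linarith

lemma qf_tail (H : Hyp k π R S μ ρ θ y p) (i : ι) (hi : i ∈ S) (v : V) (hv : v ∈ π i) (t : ℝ) :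
    Pr p S (fun A => 16 * k * ρ * θ ^ 2 + 3 * t ≤ qf π R S μ i v A) ≤
      (ball3 π R S i).card * Real.exp (-y + 2 * θ * k) + Real.exp (-(y * t)) +
        Real.exp (-(y / 2 * t)) := by
  have y1 := H.y1
  set Good : Finset ι → Prop := fun A => ∀ l ∈ ball3 π R S i, ((A.filter (R l)).card : ℝ) ≤ y with hG
  set P1 : Finset ι → Prop := fun A => ∃ l ∈ ball3 π R S i, y ≤ ((A.filter (R l)).card : ℝ) with hP1
  set P2 : Finset ι → Prop := fun A => 8 * k * ρ * θ ^ 2 + t ≤ ∑ g ∈ A, uf π R S μ p i v g with hP2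
  set P3 : Finset ι → Prop := fun A => Good A ∧
    t ≤ qf π R S μ i v A - 2 * ∑ g ∈ A, uf π R S μ p i v g with hP3
  have t1 : Pr p S P1 ≤ (ball3 π R S i).card * Real.exp (-y + 2 * θ * k) := by
    refine (Pr_exists H.hp S (ball3 π R S i) _).trans ?_
    exact sum_le_card (fun l hl => deg_tail H l (ball3_sub i hl)) (Real.exp_pos _).le le_rfl
  have t2 : Pr p S P2 ≤ Real.exp (-(y * t)) := by
    have h1 := Ex_lin H.hp (uf π R S μ p i v) S y (fun g hg => uf_le H i hi v g hg)
    have h2 := Pr_markov H.hp S P2 (fun A => Real.exp (y * ∑ g ∈ A, uf π R S μ p i v g))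
      (y * (8 * k * ρ * θ ^ 2 + t)) (fun A _ => (Real.exp_pos _).le) (fun A _ h =>
        Real.exp_le_exp.2 (mul_le_mul_of_nonneg_left h (by linarith)))
    refine h2.trans ((mul_le_mul_of_nonneg_left h1 (Real.exp_pos _).le).trans ?_)
    rw [← Real.exp_add]
    apply Real.exp_le_exp.2
    have := mul_le_mul_of_nonneg_left (uf_mean H i hi v hv) (by linarith : 0 ≤ y)
    linarith
  have t3 : Pr p S P3 ≤ Real.exp (-(y / 2 * t)) := by
    have h1 := Ex_quad H.hp (af π R S μ i v) (af_nonneg H i v) (qf π R S μ i v) (by simp [qf])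
      Good (fun A l h x hx => le_trans (by
        exact_mod_cast Finset.card_le_card
          (Finset.filter_subset_filter _ (Finset.subset_insert l A))) (h x hx))
      (y / 2) (by linarith) S (fun l hl A hA hlA => qf_insert H i v l hl A hA hlA) (by
        intro A hA hg l hl
        by_cases hb : l ∈ ball3 π R S i
        · exact af_sum_le H i hi v l A (hg l hb)
        · have : ∑ g ∈ A, af π R S μ i v l g = 0 := by
            apply Finset.sum_eq_zero
            intro g hgA
            by_contra hne
            exact hb (af_ne H hl (hA hgA) hne)
          rw [this]; simp)
    have h2 := Pr_markov H.hp S P3 (fun A => @ite ℝ (Good A) (propDecidable (Good A))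
        (Real.exp (y / 2 * qf π R S μ i v A -
        2 * (y / 2) * ∑ j ∈ A, ∑ i' ∈ S, p i' * af π R S μ i v i' j)) 0)
      (y / 2 * t) (fun A _ => by
        split_ifs
        · exact (Real.exp_pos _).le
        · exact le_rfl) (by
        rintro A _ ⟨hg, h⟩
        rw [if_pos hg]
        apply Real.exp_le_exp.2
        have := mul_le_mul_of_nonneg_left h (by linarith : 0 ≤ y / 2)
        unfold uf at this
        linarith)
    refine h2.trans ((mul_le_mul_of_nonneg_left h1 (Real.exp_pos _).le).trans ?_)
    rw [mul_one]
  refine le_trans (Pr_mono H.hp S (Q := fun A => (P1 A ∨ P2 A) ∨ P3 A) ?_)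
    ((Pr_or H.hp S _ _).trans (add_le_add ((Pr_or H.hp S _ _).trans (add_le_add t1 t2)) t3))
  intro A _ h
  by_contra hc
  push Not at hc
  obtain ⟨⟨c1, c2⟩, c3⟩ := hc
  apply c3
  refine ⟨fun l hl => ?_, ?_⟩
  · by_contra hlt
    exact c1 ⟨l, hl, (not_le.1 hlt).le⟩
  · simp only [hP2, not_le] at c2
    linarith

end quad

section step
open Classical
variable {ι V : Type}

/-- `j` survives the nibble `A` -/
def Alive (π : ι → Finset V) (R : ι → ι → Prop) (A : Finset ι) (j : ι) : Prop :=
  (∀ l ∈ A, π l = π j → ∃ g ∈ A, R l g) ∧ ∀ g ∈ A, ¬ R j g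

/-- surviving neighbourhood weight -/
noncomputable def Zf (k : ℕ) (π : ι → Finset V) (R : ι → ι → Prop) (S : Finset ι) (μ : ι → ℝ)
    (θ : ℝ) (i : ι) (v : V) (A : Finset ι) : ℝ :=
  ∑ j ∈ S.filter (fun j => R i j ∧ v ∈ π j), μ j * sf k R S μ θ j *
    if Alive π R A j then 1 else 0

variable {k : ℕ} {π : ι → Finset V} {R : ι → ι → Prop} {S : Finset ι} {μ : ι → ℝ}
    {ρ θ y : ℝ} {p : ι → ℝ}

lemma Zf_le (H : Hyp k π R S μ ρ θ y p) (i : ι) (v : V) (A : Finset ι) :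
    Zf k π R S μ θ i v A ≤ Yf k π R S μ θ i v A + qf π R S μ i v A := by
  set J := S.filter (fun j => R i j ∧ v ∈ π j) with hJ
  have hJS : J ⊆ S := Finset.filter_subset _ _
  have hq : qf π R S μ i v A = ∑ j ∈ J, ∑ l ∈ A, ∑ g ∈ A,
      if R l g ∧ π l = π j then μ j else 0 := by
    unfold qf wf
    rw [Finset.sum_comm (s := J)]
    apply Finset.sum_congr rfl; intro l _
    rw [Finset.sum_comm (s := J)]
    apply Finset.sum_congr rfl; intro g _
    rw [Finset.sum_filter]
    by_cases h : R l g
    · rw [if_pos h]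
      apply Finset.sum_congr rfl; intro j _
      by_cases h2 : π l = π j
      · rw [if_pos h2, if_pos ⟨h, h2⟩]
      · rw [if_neg h2, if_neg (fun h => h2 h.2)]
    · rw [if_neg h]
      symm
      apply Finset.sum_eq_zero
      intro j _
      rw [if_neg (fun h' => h h'.1)]
  rw [hq]
  unfold Zf Yf
  rw [← Finset.sum_add_distrib]
  apply Finset.sum_le_sum
  intro j hj
  have hjS := hJS hj
  have a0 : 0 ≤ μ j * sf k R S μ θ j := mul_nonneg (H.pos j hjS) (sf_pos j).le
  have a1 : μ j * sf k R S μ θ j ≤ μ j := mul_le_of_le_one_right (H.pos j hjS) (H.sf_le j hjS)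
  have n0 : ∀ l g, 0 ≤ if R l g ∧ π l = π j then μ j else 0 := by
    intro l g; split_ifs
    · exact H.pos j hjS
    · exact le_rfl
  have s0 : 0 ≤ ∑ l ∈ A, ∑ g ∈ A, if R l g ∧ π l = π j then μ j else 0 :=
    Finset.sum_nonneg fun l _ => Finset.sum_nonneg fun g _ => n0 l g
  by_cases hal : Alive π R A j
  · rw [if_pos hal, mul_one]
    by_cases hT : ∀ g ∈ A, ¬ Tr π R v j g
    · rw [if_pos hT, mul_one]; linarith
    · rw [if_neg hT, mul_zero, zero_add]
      push Not at hT
      obtain ⟨l, hl, hT⟩ := hT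
      have hlj : π l = π j := hT.resolve_right (fun h => hal.2 l hl h.1)
      obtain ⟨g, hg, hlg⟩ := hal.1 l hl hlj
      have e1 := Finset.single_le_sum (f := fun g => if R l g ∧ π l = π j then μ j else 0)
        (fun g _ => n0 l g) hg
      have e2 := Finset.single_le_sum
        (f := fun l => ∑ g ∈ A, if R l g ∧ π l = π j then μ j else 0)
        (fun l _ => Finset.sum_nonneg fun g _ => n0 l g) hl
      rw [if_pos ⟨hlg, hlj⟩] at e1
      exact a1.trans (e1.trans e2)
  · rw [if_neg hal, mul_zero]
    refine add_nonneg (mul_nonneg a0 ?_) s0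
    split_ifs <;> norm_num

/-- bad event -/
def Bad (k : ℕ) (π : ι → Finset V) (R : ι → ι → Prop) (S : Finset ι) (μ : ι → ℝ)
    (θ l n : ℝ) (i : ι) (A : Finset ι) : Prop :=
  Xf k π R S μ θ i A ≤ l ∨ ∃ v ∈ π i, n ≤ Zf k π R S μ θ i v A

lemma Bad_prob (H : Hyp k π R S μ ρ θ y p) (i : ι) (hi : i ∈ S) (t : ℝ) {N : ℕ}
    (hN : ∀ i ∈ S, (nbr π R S i).card ≤ N) :
    Pr p S (Bad k π R S μ θ (ρ * Real.exp (-(θ * k) - 2 * θ ^ 2 * k / y ^ 2) - t)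
      (Real.exp (-(θ * (ρ + k - 1))) + t + (16 * k * ρ * θ ^ 2 + 3 * t)) i) ≤
    Real.exp (-(y * t) + 2 * ρ * θ * k) + k * (Real.exp (-(y * t) + (k + 1) * (θ * (2 * ρ + k))) +
      ((N : ℝ) ^ 3 * Real.exp (-y + 2 * θ * k) + Real.exp (-(y * t)) + Real.exp (-(y / 2 * t)))) := by
  unfold Bad
  refine (Pr_or H.hp S _ _).trans (add_le_add (Xf_tail H i hi t) ?_)
  refine (Pr_exists H.hp S _ _).trans ?_
  apply sum_le_card _ (by positivity) (by rw [H.sys.card i hi])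
  intro v hv
  have hb : ((ball3 π R S i).card : ℝ) ≤ (N : ℝ) ^ 3 := by exact_mod_cast ball3_card hN hi
  refine le_trans ?_ (add_le_add (Yf_tail H i hi v hv t) ((qf_tail H i hi v hv t).trans
    (add_le_add (add_le_add (mul_le_mul_of_nonneg_right hb (Real.exp_pos _).le) le_rfl) le_rfl)))
  refine le_trans (Pr_mono H.hp S ?_) (Pr_or H.hp S _ _)
  intro A _ h
  by_contra hc
  push Not at hc
  have := Zf_le H i v A
  linarith [hc.1, hc.2]

lemma blk_dep {i j : ι} (hj : j ∈ nbr π R S i) {A : Finset ι} (hA : A ⊆ S) :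
    (∀ g ∈ A, ¬ R j g) ↔ ∀ g ∈ A ∩ ball3 π R S i, ¬ R j g := by
  constructor
  · intro h g hg; exact h g (Finset.mem_inter.1 hg).1
  · intro h g hg hr
    refine h g (Finset.mem_inter.2 ⟨hg, ?_⟩) hr
    exact mem_ball3.2 ⟨j, hj, g, mem_nbr.2 ⟨hA hg, Or.inr hr⟩, self_nbr (hA hg)⟩

lemma alive_dep {i j : ι} (hj : j ∈ nbr π R S i) {A : Finset ι} (hA : A ⊆ S) :
    Alive π R A j ↔ Alive π R (A ∩ ball3 π R S i) j := by
  unfold Alive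
  rw [blk_dep hj hA]
  have hb : ∀ l ∈ A, π l = π j → l ∈ ball3 π R S i := fun l hl h =>
    mem_ball3.2 ⟨j, hj, l, mem_nbr.2 ⟨hA hl, Or.inl h⟩, self_nbr (hA hl)⟩
  apply and_congr_left
  intro _
  constructor
  · intro h l hl hlj
    have hlA := (Finset.mem_inter.1 hl).1
    obtain ⟨g, hg, hr⟩ := h l hlA hlj
    exact ⟨g, Finset.mem_inter.2 ⟨hg, mem_ball3.2 ⟨j, hj, l, mem_nbr.2 ⟨hA hlA, Or.inl hlj⟩,
      mem_nbr.2 ⟨hA hg, Or.inr hr⟩⟩⟩, hr⟩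
  · intro h l hl hlj
    obtain ⟨g, hg, hr⟩ := h l (Finset.mem_inter.2 ⟨hl, hb l hl hlj⟩) hlj
    exact ⟨g, (Finset.mem_inter.1 hg).1, hr⟩

lemma Bad_dep (l n : ℝ) (i : ι) {A : Finset ι} (hA : A ⊆ S) :
    Bad k π R S μ θ l n i A ↔ Bad k π R S μ θ l n i (A ∩ ball3 π R S i) := by
  have hX : Xf k π R S μ θ i A = Xf k π R S μ θ i (A ∩ ball3 π R S i) := by
    unfold Xf
    apply Finset.sum_congr rfl
    intro j hj
    obtain ⟨hjS, hj⟩ := Finset.mem_filter.1 hj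
    have := blk_dep (R := R) (mem_nbr.2 ⟨hjS, Or.inl hj⟩) hA
    by_cases h : ∀ g ∈ A, ¬ R j g
    · rw [if_pos h, if_pos (this.1 h)]
    · rw [if_neg h, if_neg (fun h' => h (this.2 h'))]
  have hZ : ∀ v, Zf k π R S μ θ i v A = Zf k π R S μ θ i v (A ∩ ball3 π R S i) := by
    intro v
    unfold Zf
    apply Finset.sum_congr rfl
    intro j hj
    obtain ⟨hjS, hj⟩ := Finset.mem_filter.1 hj
    have := alive_dep (π := π) (R := R) (mem_nbr.2 ⟨hjS, Or.inr hj.1⟩) hA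
    by_cases h : Alive π R A j
    · rw [if_pos h, if_pos (this.1 h)]
    · rw [if_neg h, if_neg (fun h' => h (this.2 h'))]
  unfold Bad
  rw [hX]
  simp only [hZ]

lemma nibble_step (H : Hyp k π R S μ ρ θ y p) {N : ℕ} (hN : ∀ i ∈ S, (nbr π R S i).card ≤ N)
    (l n q : ℝ) (hq : ∀ i ∈ S, Pr p S (Bad k π R S μ θ l n i) ≤ q) (hq0 : 0 ≤ q) (hq1 : q ≤ 1 / 4)
    (hqd : 4 * q * (N : ℝ) ^ 6 ≤ 1) (hl : 0 ≤ l) :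
    ∃ S', S' ⊆ S ∧ (Colourable π R S' → Colourable π R S) ∧
      (∀ i ∈ S', l ≤ ∑ j ∈ S'.filter (fun j => π j = π i), μ j * sf k R S μ θ j) ∧
      (∀ i ∈ S', ∀ v ∈ π i,
        ∑ j ∈ S'.filter (fun j => R i j ∧ v ∈ π j), μ j * sf k R S μ θ j ≤ n) := by
  obtain ⟨A, hA, hgood⟩ := LLL H.hp S S (fun i A => Bad k π R S μ θ l n i (A ∩ S))
    (fun i => ball3 π R S i) (by
      intro i _ A
      rw [Bad_dep l n i Finset.inter_subset_right, Finset.inter_right_comm]) q ((N : ℝ) ^ 6) (by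
      intro i hi
      refine le_trans (Pr_mono H.hp S ?_) (hq i hi)
      intro A hA h
      rwa [Finset.inter_eq_left.2 hA] at h) hq0 hq1 (by
      intro i hi
      exact_mod_cast ball6_card H.sys hN hi) hqd
  rw [Finset.inter_eq_left.2 hA] at hgood
  unfold Bad at hgood
  push Not at hgood
  set S' := S.filter (fun j => Alive π R A j) with hS'
  have hS'S : S' ⊆ S := Finset.filter_subset _ _
  -- the surviving list of an uncoloured edge
  have hX : ∀ i, (∀ l ∈ A, π l = π i → ∃ g ∈ A, R l g) →
      Xf k π R S μ θ i A = ∑ j ∈ S'.filter (fun j => π j = π i), μ j * sf k R S μ θ j := by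
    intro i hi
    unfold Xf
    rw [hS', Finset.filter_filter, Finset.sum_filter, Finset.sum_filter]
    apply Finset.sum_congr rfl
    intro j _
    by_cases h1 : π j = π i
    · rw [if_pos h1]
      by_cases h2 : ∀ g ∈ A, ¬ R j g
      · rw [if_pos h2, if_pos ⟨⟨fun l hl hlj => hi l hl (hlj.trans h1), h2⟩, h1⟩, mul_one]
      · rw [if_neg h2, if_neg (fun h => h2 h.1.2), mul_zero]
    · rw [if_neg h1, if_neg (fun h => h1 h.2)]
  have hlist : ∀ i ∈ S, (∀ l ∈ A, π l = π i → ∃ g ∈ A, R l g) →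
      l < ∑ j ∈ S'.filter (fun j => π j = π i), μ j * sf k R S μ θ j := by
    intro i hi h
    rw [← hX i h]
    exact (hgood i hi).1
  refine ⟨S', hS'S, ?_, ?_, ?_⟩
  · rintro ⟨A', hA', hind, hcov⟩
    refine ⟨A.filter (fun i => ∀ g ∈ A, ¬ R i g) ∪ A', ?_, ?_, ?_⟩
    · exact Finset.union_subset ((Finset.filter_subset _ _).trans hA) (hA'.trans hS'S)
    · intro i hi j hj hr
      rcases Finset.mem_union.1 hi with hi | hi <;> rcases Finset.mem_union.1 hj with hj | hj
      · exact (Finset.mem_filter.1 hi).2 j (Finset.mem_filter.1 hj).1 hr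
      · have h1 := (Finset.mem_filter.1 hi).1
        obtain ⟨h2, h3⟩ := Finset.mem_filter.1 (hA' hj)
        exact h3.2 i h1 (H.sys.symm i (hA h1) j h2 hr)
      · exact (Finset.mem_filter.1 (hA' hi)).2.2 j (Finset.mem_filter.1 hj).1 hr
      · exact hind i hi j hj hr
    · intro i hi
      by_cases h : ∀ l ∈ A, π l = π i → ∃ g ∈ A, R l g
      · have h1 := hlist i hi h
        have h2 : (S'.filter (fun j => π j = π i)).Nonempty := by
          rw [Finset.nonempty_iff_ne_empty]
          intro he
          rw [he, Finset.sum_empty] at h1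
          linarith
        obtain ⟨j, hj⟩ := h2
        obtain ⟨hj, hji⟩ := Finset.mem_filter.1 hj
        obtain ⟨x, hx, hxj⟩ := hcov j hj
        exact ⟨x, Finset.mem_union_right _ hx, hxj.trans hji⟩
      · push Not at h
        obtain ⟨x, hx, hxi, hb⟩ := h
        exact ⟨x, Finset.mem_union_left _ (Finset.mem_filter.2 ⟨hx, hb⟩), hxi⟩
  · intro i hi
    exact (hlist i (hS'S hi) (Finset.mem_filter.1 hi).2.1).le
  · intro i hi v hv
    refine le_trans (le_of_eq ?_) ((hgood i (hS'S hi)).2 v hv).le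
    unfold Zf
    rw [hS', Finset.filter_filter, Finset.sum_filter, Finset.sum_filter]
    apply Finset.sum_congr rfl
    intro j _
    by_cases h1 : R i j ∧ v ∈ π j
    · rw [if_pos h1]
      by_cases h2 : Alive π R A j
      · rw [if_pos h2, if_pos ⟨h2, h1⟩, mul_one]
      · rw [if_neg h2, if_neg (fun h => h2 h.1), mul_zero]
    · rw [if_neg h1, if_neg (fun h => h1 h.2)]

end step

/-- The main assertion at ratio `ρ`, in scaled parameters. -/
def PP (k : ℕ) (ρ : ℝ) : Prop :=
  ∀ K : ℝ, 0 ≤ K → ∃ x0 : ℝ, ∀ x : ℝ, x0 ≤ x → ∀ (ι V : Type) (π : ι → Finset V) (R : ι → ι → Prop)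
    (S : Finset ι) (μ : ι → ℝ), Sys k π R S →
    Cond π R S μ ρ (Real.exp (-(K * x))) (1 / x ^ 4) → Colourable π R S

lemma PP_base (k : ℕ) (ρ : ℝ) (h : 4 * (k : ℝ) + 1 ≤ ρ) : PP k ρ := by
  intro K _
  refine ⟨0, fun x _ ι V π R S μ hS hC => ?_⟩
  have : (0 : ℝ) ≤ k := Nat.cast_nonneg k
  exact base_case hS (Real.exp_pos _) (by linarith) (by linarith) hC

lemma large_x (k : ℕ) (ρ θ K : ℝ) (hρ : 1 ≤ ρ) (hθ : 0 < θ) (hθ1 : θ ≤ 1 / 2) (hK : 0 ≤ K) :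
    ∃ x1 : ℝ, ∀ x, x1 ≤ x → ∀ N : ℕ, (N : ℝ) ≤ (2 * ρ + k) * Real.exp (K * x) →
    ∃ q, 0 ≤ q ∧ q ≤ 1 / 4 ∧ 4 * q * (N : ℝ) ^ 6 ≤ 1 ∧
      Real.exp (-(x ^ 2 * θ ^ 2) + 2 * ρ * θ * k) +
        k * (Real.exp (-(x ^ 2 * θ ^ 2) + (k + 1) * (θ * (2 * ρ + k))) +
        ((N : ℝ) ^ 3 * Real.exp (-x ^ 2 + 2 * θ * k) + Real.exp (-(x ^ 2 * θ ^ 2)) +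
          Real.exp (-(x ^ 2 / 2 * θ ^ 2)))) ≤ q := by
  have hk : (0 : ℝ) ≤ k := Nat.cast_nonneg k
  set M : ℝ := 2 * ρ * θ * k + (k + 1) * (θ * (2 * ρ + k)) + 2 * θ * k with hM
  have m1 : 0 ≤ 2 * ρ * θ * k := by positivity
  have m2 : 0 ≤ (k + 1) * (θ * (2 * ρ + k)) := by positivity
  have m3 : 0 ≤ 2 * θ * k := by positivity
  set c : ℝ := θ ^ 2 / 2 with hc
  have hc0 : 0 < c := by positivity
  set D : ℝ := 2 * ρ + k with hD
  have hD1 : 1 ≤ D := by linarith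
  set B : ℝ := Real.log (4 * (1 + 4 * k) * Real.exp M * D ^ 9) with hB
  refine ⟨max 1 ((|B| + 9 * K) / c), fun x hx N hN => ?_⟩
  have x1 : 1 ≤ x := (le_max_left _ _).trans hx
  have x2 : |B| + 9 * K ≤ c * x := by
    have := (le_max_right _ _).trans hx
    rw [div_le_iff₀ hc0] at this
    linarith
  set Δ : ℝ := D * Real.exp (K * x) with hΔ
  have hΔ1 : 1 ≤ Δ := by
    have := Real.one_le_exp (by positivity : 0 ≤ K * x)
    nlinarith
  have hN0 : (0 : ℝ) ≤ N := Nat.cast_nonneg N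
  set Q : ℝ := (1 + 4 * k) * Real.exp M * Δ ^ 3 * Real.exp (-(c * x ^ 2)) with hQ
  have hQ0 : 0 ≤ Q := by positivity
  have main : 4 * Q * Δ ^ 6 ≤ 1 := by
    have e1 : 4 * Q * Δ ^ 6 = (4 * (1 + 4 * k) * Real.exp M * D ^ 9) *
        (Real.exp (K * x) ^ 9 * Real.exp (-(c * x ^ 2))) := by
      rw [hQ, hΔ]; ring
    have e2 : 4 * (1 + 4 * k) * Real.exp M * D ^ 9 = Real.exp B := by
      rw [hB, Real.exp_log (by positivity)]
    rw [e1, e2, ← Real.exp_nat_mul, ← Real.exp_add, ← Real.exp_add, Real.exp_le_one_iff]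
    have b1 := le_abs_self B
    have b2 : |B| ≤ |B| * x := le_mul_of_one_le_right (abs_nonneg B) x1
    have b3 := mul_le_mul_of_nonneg_right x2 (by linarith : 0 ≤ x)
    push_cast
    nlinarith
  have hΔ6 : 1 ≤ Δ ^ 6 := one_le_pow₀ hΔ1
  refine ⟨Q, hQ0, ?_, ?_, ?_⟩
  · nlinarith
  · refine le_trans ?_ main
    exact mul_le_mul_of_nonneg_left (pow_le_pow_left₀ hN0 hN 6) (by linarith)
  · have hΔ3 : 1 ≤ Δ ^ 3 := one_le_pow₀ hΔ1
    have hN3 : (N : ℝ) ^ 3 ≤ Δ ^ 3 := pow_le_pow_left₀ hN0 hN 3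
    set U : ℝ := Real.exp M * Real.exp (-(c * x ^ 2)) with hU
    have hU0 : 0 < U := by positivity
    have gen : ∀ z : ℝ, z ≤ M + -(c * x ^ 2) → Real.exp z ≤ U := by
      intro z hz
      rw [hU, ← Real.exp_add]
      exact Real.exp_le_exp.2 hz
    have hx2 : 0 ≤ x ^ 2 := sq_nonneg x
    have hcx : 0 ≤ c * x ^ 2 := by positivity
    have hcθ : x ^ 2 * θ ^ 2 = 2 * (c * x ^ 2) := by rw [hc]; ring
    have hcθ' : x ^ 2 / 2 * θ ^ 2 = (c * x ^ 2) := by rw [hc]; ring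
    have g1 := gen (-(x ^ 2 * θ ^ 2) + 2 * ρ * θ * k) (by linarith)
    have g2 := gen (-(x ^ 2 * θ ^ 2) + (k + 1) * (θ * (2 * ρ + k))) (by
      rw [hcθ]; linarith)
    have hcle : c ≤ 1 := by rw [hc]; nlinarith
    have g3 := gen (-x ^ 2 + 2 * θ * k) (by
      have := mul_le_of_le_one_left hx2 hcle
      linarith)
    have g4 := gen (-(x ^ 2 * θ ^ 2)) (by linarith)
    have g5 := gen (-(x ^ 2 / 2 * θ ^ 2)) (by linarith)
    have hUΔ : U ≤ Δ ^ 3 * U := le_mul_of_one_le_left hU0.le hΔ3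
    have g3' : (N : ℝ) ^ 3 * Real.exp (-x ^ 2 + 2 * θ * k) ≤ Δ ^ 3 * U :=
      mul_le_mul hN3 g3 (Real.exp_pos _).le (by positivity)
    have hQe : Q = Δ ^ 3 * U + k * (4 * (Δ ^ 3 * U)) := by rw [hQ, hU]; ring
    rw [hQe]
    apply add_le_add (g1.trans hUΔ)
    apply mul_le_mul_of_nonneg_left _ hk
    linarith

open Classical in
lemma PP_step (k : ℕ) (ρ ρ' θ n l : ℝ) (hρ : 1 ≤ ρ) (hρ' : 0 < ρ') (hθ : 0 < θ) (hθ1 : θ ≤ 1 / 2)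
    (hn : n = Real.exp (-(θ * (ρ + k - 1))) + θ ^ 2 + (16 * k * ρ * θ ^ 2 + 3 * θ ^ 2))
    (hl : l = ρ * Real.exp (-(θ * k) - 2 * θ ^ 2 * k) - θ ^ 2)
    (hn1 : n ≤ 1) (hn0 : 1 / 16 ≤ n) (hln : ρ' * n ≤ l) (hP : PP k ρ') : PP k ρ := by
  intro K hK
  have hk : (0 : ℝ) ≤ k := Nat.cast_nonneg k
  obtain ⟨x0, hx0⟩ := hP (2 * K + 2 * k) (by positivity)
  obtain ⟨x1, hx1⟩ := large_x k ρ θ K hρ hθ hθ1 hK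
  refine ⟨max (max (2 * x0) x1) (k + 1), fun x hx ι V π R S₀ μ hS₀ hC₀ => ?_⟩
  have hxa : 2 * x0 ≤ x := ((le_max_left _ _).trans (le_max_left _ _)).trans hx
  have hxb : x1 ≤ x := ((le_max_right _ _).trans (le_max_left _ _)).trans hx
  have hxc : k + 1 ≤ x := (le_max_right _ _).trans hx
  have x1 : 1 ≤ x := by linarith
  have hi1 : 1 / x ^ 4 ≤ 1 := by
    rw [div_le_one (by positivity)]; exact one_le_pow₀ x1
  set lo := Real.exp (-(K * x)) with hlo
  have lo0 : 0 < lo := Real.exp_pos _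
  obtain ⟨S, hSS, hC, hcov, hup⟩ := trim lo0 (by linarith) (hi1.trans hρ) hC₀
  have hS := hS₀.mono hSS
  suffices Colourable π R S by
    obtain ⟨A, hA, h1, h2⟩ := this
    refine ⟨A, hA.trans hSS, h1, fun i hi => ?_⟩
    obtain ⟨j, hj, hji⟩ := hcov i hi
    obtain ⟨z, hz, hzj⟩ := h2 j hj
    exact ⟨z, hz, hzj.trans hji⟩
  have pos : ∀ i ∈ S, 0 ≤ μ i := fun i hi => lo0.le.trans (hC.lo i hi)
  set p : ι → ℝ := fun i => if i ∈ S then θ * μ i else 0 with hp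
  have xx : x ≤ x ^ 2 := by nlinarith
  have H : Hyp k π R S μ ρ θ (x ^ 2) p :=
    { sys := hS
      pos := pos
      hi := fun i hi => by
        have := hC.hi i hi
        rwa [← pow_mul]
      listlo := hC.list
      listhi := hup
      nb := hC.nb
      θ0 := hθ.le
      θ1 := hθ1
      hy := by linarith
      hyθ := by nlinarith
      hp := fun i => by
        simp only [hp]
        split_ifs with h
        · have a := pos i h
          have b := (hC.hi i h).trans hi1
          exact ⟨by positivity, by nlinarith⟩
        · norm_num
      hpi := fun i hi => by simp [hp, hi]
      ρ0 := by linarith }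
  set Δ := (2 * ρ + k) * Real.exp (K * x) with hΔ
  have hΔ0 : 0 ≤ Δ := by positivity
  set N := ⌊Δ⌋₊ with hN
  have hNΔ : (N : ℝ) ≤ Δ := Nat.floor_le hΔ0
  have hcard : ∀ i ∈ S, (nbr π R S i).card ≤ N := by
    intro i hi
    apply Nat.le_floor
    have e1 : ((nbr π R S i).card : ℝ) * lo ≤ ∑ j ∈ nbr π R S i, μ j := by
      calc ((nbr π R S i).card : ℝ) * lo = ∑ j ∈ nbr π R S i, lo := by simp
        _ ≤ _ := Finset.sum_le_sum fun j hj => hC.lo j (mem_nbr.1 hj).1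
    have e2 : ∑ j ∈ nbr π R S i, μ j ≤ 2 * ρ + k := by
      have hsub : nbr π R S i ⊆ S.filter (fun j => π j = π i) ∪ S.filter (fun j => R i j) := by
        intro j hj
        obtain ⟨hj, h⟩ := mem_nbr.1 hj
        rw [Finset.mem_union]
        exact h.imp (fun h => Finset.mem_filter.2 ⟨hj, h⟩) (fun h => Finset.mem_filter.2 ⟨hj, h⟩)
      have d : ∑ j ∈ S.filter (fun j => π j = π i) ∪ S.filter (fun j => R i j), μ j ≤
          ∑ j ∈ S.filter (fun j => π j = π i), μ j + ∑ j ∈ S.filter (fun j => R i j), μ j := by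
        rw [← Finset.sum_union_inter]
        have : 0 ≤ ∑ j ∈ S.filter (fun j => π j = π i) ∩ S.filter (fun j => R i j), μ j :=
          Finset.sum_nonneg fun j hj =>
            pos j (Finset.mem_filter.1 (Finset.mem_inter.1 hj).1).1
        linarith
      have u1 := hup i hi
      have u2 := nsum_le hS pos hC.nb i hi
      refine (Finset.sum_le_sum_of_subset_of_nonneg hsub ?_).trans (d.trans (add_le_add u1 u2))
      intro j hj _
      rcases Finset.mem_union.1 hj with h | h <;> exact pos j (Finset.mem_filter.1 h).1
    have e3 : lo * Real.exp (K * x) = 1 := by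
      rw [hlo, ← Real.exp_add]; simp
    calc ((nbr π R S i).card : ℝ) = ((nbr π R S i).card * lo) * Real.exp (K * x) := by
          rw [mul_assoc, e3, mul_one]
      _ ≤ Δ := mul_le_mul_of_nonneg_right (e1.trans e2) (Real.exp_pos _).le
  obtain ⟨q, hq0, hq1, hqd, hq⟩ := hx1 x hxb N hNΔ
  have l0 : 0 ≤ l := le_trans (by positivity) hln
  have hlle : l ≤ ρ * Real.exp (-(θ * k) - 2 * θ ^ 2 * k / (x ^ 2) ^ 2) - θ ^ 2 := by
    rw [hl]
    have : 2 * θ ^ 2 * k / (x ^ 2) ^ 2 ≤ 2 * θ ^ 2 * k :=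
      div_le_self (by positivity) (one_le_pow₀ (one_le_pow₀ x1))
    gcongr
  obtain ⟨S', hS', hcol, hlist, hnb⟩ := nibble_step H hcard l n q (by
    intro i hi
    refine le_trans (Pr_mono H.hp S ?_) ((Bad_prob H i hi (θ ^ 2) hcard).trans hq)
    intro A _ h
    rw [← hn]
    exact h.imp (fun h => h.trans hlle) id) hq0 hq1 hqd l0
  apply hcol
  have npos : 0 < n := by linarith
  apply hx0 (x / 2) (by linarith) ι V π R S' (fun j => μ j * sf k R S μ θ j / n) (hS.mono hS')
  refine ⟨?_, ?_, ?_, ?_⟩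
  · intro i hi
    have hiS := hS' hi
    rw [le_div_iff₀ npos]
    have s1 : Real.exp (-k) ≤ sf k R S μ θ i := by
      unfold sf
      apply Real.exp_le_exp.2
      have := H.nw_nonneg i
      have := H.nw_le i hiS
      nlinarith
    have s2 : lo * Real.exp (-k) ≤ μ i * sf k R S μ θ i :=
      mul_le_mul (hC.lo i hiS) s1 (Real.exp_pos _).le (pos i hiS)
    refine le_trans ?_ s2
    refine (mul_le_of_le_one_right (Real.exp_pos _).le hn1).trans ?_
    rw [hlo, ← Real.exp_add]
    apply Real.exp_le_exp.2
    nlinarith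
  · intro i hi
    have hiS := hS' hi
    rw [div_le_iff₀ npos]
    have s1 := H.sf_le i hiS
    have s2 : μ i * sf k R S μ θ i ≤ 1 / x ^ 4 :=
      (mul_le_of_le_one_right (pos i hiS) s1).trans (hC.hi i hiS)
    refine s2.trans ?_
    have : 1 / (x / 2) ^ 4 * n = (16 * n) * (1 / x ^ 4) := by
      field_simp; norm_num
    rw [this]
    exact le_mul_of_one_le_left (by positivity) (by linarith)
  · intro i hi
    rw [← Finset.sum_div, le_div_iff₀ npos]
    exact hln.trans (hlist i hi)
  · intro i hi v hv
    rw [← Finset.sum_div, div_le_one npos]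
    exact hnb i hi v hv

lemma arith (k : ℕ) (ε : ℝ) (hε : 0 < ε) (hε1 : ε ≤ 1) (r : ℝ) (hr : 1 ≤ r) :
    ∃ θ c : ℝ, 0 < θ ∧ θ ≤ 1 / 2 ∧ 0 < c ∧ ∀ ρ, 1 + ε ≤ ρ → ρ ≤ r → ∃ n l : ℝ,
      n = Real.exp (-(θ * (ρ + k - 1))) + θ ^ 2 + (16 * k * ρ * θ ^ 2 + 3 * θ ^ 2) ∧
      l = ρ * Real.exp (-(θ * k) - 2 * θ ^ 2 * k) - θ ^ 2 ∧
      n ≤ 1 ∧ 1 / 16 ≤ n ∧ (ρ + c) * n ≤ l := by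
  have hk : (0 : ℝ) ≤ k := Nat.cast_nonneg k
  have hkr : 0 ≤ k * r := by positivity
  set M : ℝ := 6 + 16 * (k * r) + r + k with hM
  have hM0 : 0 < M := by linarith
  set θ : ℝ := ε / (16 * M) with hθ
  have θ0 : 0 < θ := by positivity
  have hθM : θ * M = ε / 16 := by rw [hθ]; field_simp
  have b1 : θ * 6 ≤ ε / 16 := by rw [← hθM]; apply mul_le_mul_of_nonneg_left _ θ0.le; linarith
  have b2 : θ * (4 + 16 * (k * r)) ≤ ε / 16 := by
    rw [← hθM]; apply mul_le_mul_of_nonneg_left _ θ0.le; linarith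
  have b3 : θ * (2 * (k * r) + 2) ≤ ε / 16 := by
    rw [← hθM]; apply mul_le_mul_of_nonneg_left _ θ0.le; linarith
  have b4 : θ * (r + k) ≤ ε / 16 := by
    rw [← hθM]; apply mul_le_mul_of_nonneg_left _ θ0.le; linarith
  have b5 : θ * k ≤ ε / 16 := by
    rw [← hθM]; apply mul_le_mul_of_nonneg_left _ θ0.le; linarith
  refine ⟨θ, θ * ε / 8, θ0, by linarith, by positivity, fun ρ h1 h2 => ⟨_, _, rfl, rfl, ?_⟩⟩
  set E := Real.exp (-(θ * k)) with hE
  have E0 : 0 < E := Real.exp_pos _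
  have E1 : E ≤ 1 := by rw [hE, Real.exp_le_one_iff]; have := mul_nonneg θ0.le hk; linarith
  have E2 : 1 / 2 ≤ E := by
    have := Real.add_one_le_exp (-(θ * k))
    rw [← hE] at this
    linarith
  have ρ0 : 0 < ρ := by linarith
  have kρ : k * ρ ≤ k * r := mul_le_mul_of_nonneg_left h2 hk
  have kρ0 : 0 ≤ k * ρ := by positivity
  -- upper bound on `n`
  have f1 : Real.exp (-(θ * (ρ + k - 1))) ≤ E * (1 - θ * ε / 2) := by
    have e1 : Real.exp (-(θ * (ρ + k - 1))) = E * Real.exp (-(θ * (ρ - 1))) := by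
      rw [hE, ← Real.exp_add]; congr 1; ring
    rw [e1]
    apply mul_le_mul_of_nonneg_left _ E0.le
    have e2 : Real.exp (-(θ * (ρ - 1))) ≤ Real.exp (-(θ * ε)) := by
      apply Real.exp_le_exp.2
      have := mul_le_mul_of_nonneg_left (by linarith : ε ≤ ρ - 1) θ0.le
      linarith
    have te : θ * ε ≤ 1 / 2 := by nlinarith
    have te0 : 0 < θ * ε := by positivity
    have e3 := exp_le_quad (u := -(θ * ε)) (by rw [abs_neg, abs_of_pos te0]; linarith)
    have e4 := mul_le_mul_of_nonneg_left te te0.le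
    linarith
  have f2 : θ ^ 2 + (16 * k * ρ * θ ^ 2 + 3 * θ ^ 2) ≤ E * (θ * ε / 8) := by
    have : θ ^ 2 + (16 * k * ρ * θ ^ 2 + 3 * θ ^ 2) ≤ θ * (θ * (4 + 16 * (k * r))) := by
      have := mul_le_mul_of_nonneg_left kρ (sq_nonneg θ)
      linarith
    have h3 := mul_le_mul_of_nonneg_left b2 θ0.le
    have h4 : θ * (ε / 16) ≤ E * (θ * ε / 8) := by
      have : 0 ≤ θ * ε := by positivity
      nlinarith
    linarith
  have f3 : Real.exp (-(θ * (ρ + k - 1))) + θ ^ 2 + (16 * k * ρ * θ ^ 2 + 3 * θ ^ 2) ≤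
      E * (1 - θ * ε / 4) := by
    have : 0 ≤ E * (θ * ε) := by positivity
    linarith
  have f4 : Real.exp (-(θ * k) - 2 * θ ^ 2 * k) = E * Real.exp (-(2 * θ ^ 2 * k)) := by
    rw [hE, ← Real.exp_add]; congr 1
  have f5 : E * (ρ - θ * ε / 8) ≤ ρ * Real.exp (-(θ * k) - 2 * θ ^ 2 * k) - θ ^ 2 := by
    rw [f4]
    have g1 := Real.add_one_le_exp (-(2 * θ ^ 2 * k))
    have g2 : ρ * (E * (-(2 * θ ^ 2 * k) + 1)) ≤ ρ * (E * Real.exp (-(2 * θ ^ 2 * k))) :=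
      mul_le_mul_of_nonneg_left (mul_le_mul_of_nonneg_left g1 E0.le) (by linarith)
    have g3 : θ ^ 2 ≤ E * (2 * θ ^ 2) := by nlinarith [sq_nonneg θ]
    have g4 : θ ^ 2 * (2 * (k * ρ) + 2) ≤ θ * ε / 8 := by
      have a1 := mul_le_mul_of_nonneg_left b3 θ0.le
      have a2 := mul_le_mul_of_nonneg_left kρ (sq_nonneg θ)
      have a3 : 0 ≤ θ * ε := by positivity
      linarith
    have g5 := mul_le_mul_of_nonneg_left g4 E0.le
    linarith
  refine ⟨?_, ?_, ?_⟩
  · have : 0 ≤ E * (θ * ε) := by positivity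
    linarith
  · have g1 := Real.add_one_le_exp (-(θ * (ρ + k - 1)))
    have g2 : θ * (ρ + k - 1) ≤ θ * (r + k) := mul_le_mul_of_nonneg_left (by linarith) θ0.le
    have g3 : 0 ≤ 16 * k * ρ * θ ^ 2 := by positivity
    have g4 := sq_nonneg θ
    linarith
  · have c0 : 0 < θ * ε := by positivity
    calc _ ≤ (ρ + θ * ε / 8) * (E * (1 - θ * ε / 4)) :=
          mul_le_mul_of_nonneg_left f3 (by positivity)
      _ = E * ((ρ + θ * ε / 8) * (1 - θ * ε / 4)) := by ring
      _ ≤ E * (ρ - θ * ε / 8) := by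
          apply mul_le_mul_of_nonneg_left _ E0.le
          nlinarith
      _ ≤ _ := f5

lemma PP_all (k : ℕ) (ε : ℝ) (hε : 0 < ε) (hε1 : ε ≤ 1) : PP k (1 + ε) := by
  have hk : (0 : ℝ) ≤ k := Nat.cast_nonneg k
  obtain ⟨θ, c, θ0, θ1, c0, h⟩ := arith k ε hε hε1 (4 * k + 1) (by linarith)
  have ind : ∀ m : ℕ, ∀ ρ, 1 + ε ≤ ρ → 4 * (k : ℝ) + 1 ≤ ρ + m * c → PP k ρ := by
    intro m
    induction m with
    | zero => intro ρ _ h2; exact PP_base k ρ (by simpa using h2)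
    | succ m ih =>
      intro ρ h1 h2
      by_cases h3 : 4 * (k : ℝ) + 1 ≤ ρ
      · exact PP_base k ρ h3
      · obtain ⟨n, l, hn, hl, n1, n0, hln⟩ := h ρ h1 (by linarith)
        refine PP_step k ρ (ρ + c) θ n l (by linarith) (by linarith) θ0 θ1 hn hl n1 n0 hln
          (ih (ρ + c) (by linarith) ?_)
        push_cast at h2
        linarith
  obtain ⟨m, hm⟩ := exists_nat_ge ((4 * (k : ℝ) + 1) / c)
  rw [div_le_iff₀ c0] at hm
  exact ind m (1 + ε) le_rfl (by linarith)
theorem stmt_2 :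
    ∀ (k : ℕ) (ε : ℝ), 0 < ε →
    ∃ δ₀ : ℕ, ∀ δ : ℕ, δ₀ ≤ δ →
    ∀ (V : Type) [Fintype V] [DecidableEq V]
      (E : Finset (Finset V)) (σ : Finset V → Finset V → ℕ ≃ ℕ)
      (L : Finset V → Finset ℕ) (μ : Finset V → ℕ → ℝ),
      -- G is k-uniform
      (∀ e ∈ E, e.card = k) →
      -- G is linear
      (∀ e ∈ E, ∀ f ∈ E, e ≠ f → (e ∩ f).card ≤ 1) →
      IsEdgeCorrespondence E σ →
      -- (L, μ) is an assignment of weighted lists: weights lie in (0,1]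
      (∀ e ∈ E, ∀ c ∈ L e, 0 < μ e c ∧ μ e c ≤ 1) →
      -- (a)
      (∀ e ∈ E, ∀ c ∈ L e,
        Real.exp (-((δ : ℝ) ^ ((1 : ℝ) / 25))) ≤ μ e c ∧ μ e c ≤ (δ : ℝ)⁻¹) →
      -- (b)
      (∀ e ∈ E, 1 + ε ≤ ∑ c ∈ L e, μ e c) →
      -- (c)
      (∀ e ∈ E, ∀ v ∈ e, ∀ c ∈ L e, NWeight E L μ σ e v c ≤ 1) →
      ∃ γ : Finset V → ℕ, IsLσColouring E L σ γ := by
  intro k ε hε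
  obtain ⟨x0, hx0⟩ := PP_all k (min ε 1) (lt_min hε one_pos) (min_le_right _ _) 1 zero_le_one
  refine ⟨⌈max x0 1 ^ 4⌉₊, ?_⟩
  intro δ hδ V _ _ E σ L μ hunif hlin hσ hμ ha hb hc
  have hδ1 : max x0 1 ^ 4 ≤ (δ : ℝ) := Nat.ceil_le.1 hδ
  have hm1 : 1 ≤ max x0 1 := le_max_right _ _
  have hδ2 : (1 : ℝ) ≤ δ := le_trans (one_le_pow₀ hm1) hδ1
  have hδ0 : (0 : ℝ) ≤ δ := by linarith
  set x : ℝ := (δ : ℝ) ^ ((1 : ℝ) / 4) with hx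
  have hx4 : x ^ 4 = δ := by
    rw [hx, ← Real.rpow_natCast, ← Real.rpow_mul hδ0]; norm_num
  have hxx0 : x0 ≤ x := by
    refine (le_max_left x0 1).trans ?_
    have hx' : 0 ≤ x := Real.rpow_nonneg hδ0 _
    rw [← hx4] at hδ1
    exact le_of_pow_le_pow_left₀ (by norm_num) hx' hδ1
  have hx25 : (δ : ℝ) ^ ((1 : ℝ) / 25) ≤ x :=
    Real.rpow_le_rpow_of_exponent_le hδ2 (by norm_num)
  set S : Finset (Finset V × ℕ) := E.biUnion (fun e => (L e).image (fun c => (e, c))) with hS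
  have memS : ∀ a : Finset V × ℕ, a ∈ S ↔ a.1 ∈ E ∧ a.2 ∈ L a.1 := by
    rintro ⟨e, c⟩
    simp only [hS, Finset.mem_biUnion, Finset.mem_image, Prod.mk.injEq]
    constructor
    · rintro ⟨e', he', c', hc', rfl, rfl⟩; exact ⟨he', hc'⟩
    · rintro ⟨h1, h2⟩; exact ⟨e, h1, c, h2, rfl, rfl⟩
  have sumS : ∀ f : Finset V × ℕ → ℝ, ∑ a ∈ S, f a = ∑ e ∈ E, ∑ c ∈ L e, f (e, c) := by
    intro f
    rw [hS, Finset.sum_biUnion]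
    · apply Finset.sum_congr rfl
      intro e _
      rw [Finset.sum_image]
      intro c _ d _ h
      exact (Prod.mk.inj h).2
    · intro e _ e' _ hne
      rw [Function.onFun, Finset.disjoint_left]
      intro a h1 h2
      obtain ⟨c, _, rfl⟩ := Finset.mem_image.1 h1
      obtain ⟨d, _, h⟩ := Finset.mem_image.1 h2
      exact hne (Prod.mk.inj h).1.symm
  have incs : ∀ e f : Finset V, HIncident e f → HIncident f e := fun e f h =>
    ⟨h.1.symm, by rw [Finset.inter_comm]; exact h.2⟩
  set R : Finset V × ℕ → Finset V × ℕ → Prop := fun a b => HIncident a.1 b.1 ∧ σ b.1 a.1 b.2 = a.2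
    with hR
  have inv : ∀ e ∈ E, ∀ f ∈ E, HIncident e f → ∀ c d, σ e f c = d → σ f e d = c := by
    intro e he f hf h c d hcd
    rw [hσ e he f hf h, ← hcd, Equiv.symm_apply_apply]
  have sys : Sys k (Prod.fst : Finset V × ℕ → Finset V) R S :=
    { symm := fun a ha' b hb' h => ⟨incs _ _ h.1,
        inv b.1 ((memS b).1 hb').1 a.1 ((memS a).1 ha').1 (incs _ _ h.1) _ _ h.2⟩
      ne := fun a _ b _ h => h.1.1
      inc := fun a _ b _ h => by
        obtain ⟨v, hv⟩ := h.1.2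
        exact ⟨v, (Finset.mem_inter.1 hv).1, (Finset.mem_inter.1 hv).2⟩
      uniq := fun a _ b _ b' _ h h' hbb => by
        apply Prod.ext hbb
        have h1 := h.2
        have h2 := h'.2
        rw [← hbb] at h2
        exact (σ b.1 a.1).injective (h1.trans h2.symm)
      lin := fun a ha' b hb' hne u v hu hu' hv hv' => by
        have := hlin a.1 ((memS a).1 ha').1 b.1 ((memS b).1 hb').1 hne
        rw [Finset.card_le_one] at this
        exact this u (Finset.mem_inter.2 ⟨hu, hu'⟩) v (Finset.mem_inter.2 ⟨hv, hv'⟩)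
      card := fun a ha' => hunif a.1 ((memS a).1 ha').1 }
  have cond : Cond (Prod.fst : Finset V × ℕ → Finset V) R S (fun a => μ a.1 a.2) (1 + min ε 1)
      (Real.exp (-(1 * x))) (1 / x ^ 4) := by
    refine ⟨?_, ?_, ?_, ?_⟩
    · intro a haS
      obtain ⟨h1, h2⟩ := (memS a).1 haS
      refine le_trans (Real.exp_le_exp.2 ?_) (ha a.1 h1 a.2 h2).1
      linarith
    · intro a haS
      obtain ⟨h1, h2⟩ := (memS a).1 haS
      rw [hx4, one_div]
      exact (ha a.1 h1 a.2 h2).2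
    · intro a haS
      obtain ⟨h1, h2⟩ := (memS a).1 haS
      rw [Finset.sum_filter, sumS]
      rw [Finset.sum_eq_single a.1]
      · have := hb a.1 h1
        have := min_le_left ε 1
        simp only [if_true]
        linarith
      · intro e _ hne
        simp [hne]
      · intro h; exact absurd h1 h
    · intro a haS v hv
      obtain ⟨h1, h2⟩ := (memS a).1 haS
      refine le_trans (le_of_eq ?_) (hc a.1 h1 v hv a.2 h2)
      unfold NWeight
      rw [Finset.sum_filter, sumS, Finset.sum_filter]
      apply Finset.sum_congr rfl
      intro f _
      by_cases hvf : v ∈ f ∧ f ≠ a.1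
      · rw [if_pos hvf, Finset.sum_filter]
        apply Finset.sum_congr rfl
        intro c _
        have hinc : HIncident a.1 f := ⟨hvf.2.symm, v, Finset.mem_inter.2 ⟨hv, hvf.1⟩⟩
        by_cases h : σ f a.1 c = a.2
        · rw [if_pos h, if_pos ⟨⟨hinc, h⟩, hvf.1⟩]
        · rw [if_neg h, if_neg (fun h' => h h'.1.2)]
      · rw [if_neg hvf]
        apply Finset.sum_eq_zero
        intro c _
        rw [if_neg]
        rintro ⟨⟨h, _⟩, h'⟩
        exact hvf ⟨h', h.1.symm⟩
  obtain ⟨A, hAS, hind, hcov⟩ := hx0 x hxx0 _ V _ R S _ sys cond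
  have hex : ∀ e ∈ E, ∃ c, (e, c) ∈ A := by
    intro e he
    have hne : (L e).Nonempty := by
      rw [Finset.nonempty_iff_ne_empty]
      intro h
      have := hb e he
      rw [h, Finset.sum_empty] at this
      linarith
    obtain ⟨c, hcL⟩ := hne
    obtain ⟨⟨f, d⟩, hbA, hbe⟩ := hcov (e, c) ((memS _).2 ⟨he, hcL⟩)
    exact ⟨d, by rw [← show f = e from hbe]; exact hbA⟩
  choose! γ hγ using hex
  refine ⟨γ, fun e he => ((memS _).1 (hAS (hγ e he))).2, ?_⟩
  intro e he f hf hinc h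
  exact hind (f, γ f) (hγ f hf) (e, γ e) (hγ e he) ⟨incs _ _ hinc, h⟩
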